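/- arXiv:math/0104075 — 2 statements merged into one kernel-verified Lean document; each statement's English description precedes it below -/
import Mathlib

section
/- Assume the cocycle f is convolution invertible, i.e. there exists f^{-1} ∈ Hom_k(H⊗H, A) with f * f^{-1} = f^{-1} * f = ε⊗ε·1_A in the convolution algebra. Then the map γ : H → E given by γ(h) = 1#h is convolution invertible in Hom_k(H,E), with convolution inverse γ^{-1}(h) = (1#h)^{-1} = f^{-1}(S(h^{(2)}), h^{(3)}) # S(h^{(1)}), i.e. γ(h^{(1)})γ^{-1}(h^{(2)}) = γ^{-1}(h^{(1)})γ(h^{(2)}) = ε(h)·1#1 for all h ∈ H. -/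
open TensorProduct

noncomputable section

namespace HopfCrossed

variable (k : Type) [CommRing k]

def TpowCat (V : ModuleCat k) : ℕ → ModuleCat k
  | 0 => ModuleCat.of k k
  | n + 1 => ModuleCat.of k (V ⊗[k] (TpowCat V n))

abbrev Tpow (V : Type) [AddCommGroup V] [Module k V] (n : ℕ) : Type :=
  TpowCat k (ModuleCat.of k V) n

def tp {V : Type} [AddCommGroup V] [Module k V] : ∀ {n : ℕ}, (Fin n → V) → Tpow k V n
  | 0, _ => (1 : k)
  | _ + 1, v => (v 0) ⊗ₜ[k] (tp fun i => v i.succ)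

section Coalg
variable {H : Type} [AddCommGroup H] [Module k H]

def itComul [Coalgebra k H] : ∀ n : ℕ, H →ₗ[k] Tpow k H (n + 1)
  | 0 => (TensorProduct.rid k H).symm.toLinearMap
  | n + 1 =>
      (TensorProduct.map LinearMap.id (itComul n)) ∘ₗ (Coalgebra.comul (R := k))

def SRep [Coalgebra k H] (n : ℕ) (h : H) (N : ℕ) (u : Fin N → Fin (n + 1) → H) : Prop :=
  itComul k n h = ∑ i, tp k (u i)

def iterAct {A : Type} [AddCommGroup A] [Module k A]
    (act : H →ₗ[k] A →ₗ[k] A) : ∀ {s : ℕ}, (Fin s → H) → A → A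
  | 0, _, a => a
  | _ + 1, h, a => act (h 0) (iterAct act (fun i => h i.succ) a)

end Coalg

/-- A weak action of a Hopf algebra `H` on a `k`-algebra `A` (Blattner–Cohen–Montgomery,
Doi–Takeuchi), written `act h a = a^h`. -/
structure WeakAction (k A H : Type) [CommRing k] [Ring A] [Algebra k A] [Ring H] [HopfAlgebra k H] : Type where
  act : H →ₗ[k] A →ₗ[k] A
  act_mul : ∀ (h : H) (a b : A) (N : ℕ) (u : Fin N → Fin 2 → H), SRep k 1 h N u →
    act h (a * b) = ∑ i, act (u i 0) a * act (u i 1) b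
  act_one : ∀ h : H, act h 1 = Coalgebra.counit (R := k) h • (1 : A)
  one_act : ∀ a : A, act 1 a = a

variable {A H : Type} [Ring A] [Algebra k A] [Ring H] [HopfAlgebra k H]
variable {k}

/-- Normality of the cocycle `f`. -/
def IsNormal (f : H →ₗ[k] H →ₗ[k] A) : Prop :=
  ∀ h : H, f h 1 = Coalgebra.counit (R := k) h • (1 : A) ∧
    f 1 h = Coalgebra.counit (R := k) h • (1 : A)

/-- The cocycle condition
`f(l⁽¹⁾,m⁽¹⁾)^{h⁽¹⁾} f(h⁽²⁾, l⁽²⁾m⁽²⁾) = f(h⁽¹⁾,l⁽¹⁾) f(h⁽²⁾l⁽²⁾, m)`. -/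
def IsCocycle (W : WeakAction k A H) (f : H →ₗ[k] H →ₗ[k] A) : Prop :=
  ∀ (h l m : H) (N₁ N₂ N₃ : ℕ) (u : Fin N₁ → Fin 2 → H) (v : Fin N₂ → Fin 2 → H)
    (w : Fin N₃ → Fin 2 → H),
    SRep k 1 h N₁ u → SRep k 1 l N₂ v → SRep k 1 m N₃ w →
    (∑ i, ∑ j, ∑ p, W.act (u i 0) (f (v j 0) (w p 0)) * f (u i 1) (v j 1 * w p 1)) =
      ∑ i, ∑ j, f (u i 0) (v j 0) * f (u i 1 * v j 1) m

/-- The twisted module condition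
`(a^{l⁽¹⁾})^{h⁽¹⁾} f(h⁽²⁾,l⁽²⁾) = f(h⁽¹⁾,l⁽¹⁾) a^{h⁽²⁾l⁽²⁾}`. -/
def IsTwistedModule (W : WeakAction k A H) (f : H →ₗ[k] H →ₗ[k] A) : Prop :=
  ∀ (h l : H) (a : A) (N₁ N₂ : ℕ) (u : Fin N₁ → Fin 2 → H) (v : Fin N₂ → Fin 2 → H),
    SRep k 1 h N₁ u → SRep k 1 l N₂ v →
    (∑ i, ∑ j, W.act (u i 0) (W.act (v j 0) a) * f (u i 1) (v j 1)) =
      ∑ i, ∑ j, f (u i 0) (v j 0) * W.act (u i 1 * v j 1) a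

variable (k A H) in
/-- A crossed product `E = A #_f H` of `A` by `H`:  a ring `E` identified with `A ⊗ H`
as a `k`-module, whose multiplication is given by the crossed product formula
`(a # h)(b # l) = a b^{h⁽¹⁾} f(h⁽²⁾,l⁽¹⁾) # h⁽³⁾ l⁽²⁾`. -/
structure CrossedProduct (E : Type) [Ring E] [Algebra k E] extends WeakAction k A H where
  f : H →ₗ[k] H →ₗ[k] A
  ι : (A ⊗[k] H) ≃ₗ[k] E
  ι_one : ι (1 ⊗ₜ[k] 1) = 1
  ι_mul : ∀ (a b : A) (h l : H) (N M : ℕ) (u : Fin N → Fin 3 → H) (v : Fin M → Fin 2 → H),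
    SRep k 2 h N u → SRep k 1 l M v →
    ι (a ⊗ₜ[k] h) * ι (b ⊗ₜ[k] l) =
      ∑ i, ∑ j, ι ((a * act (u i 0) b * f (u i 1) (v j 0)) ⊗ₜ[k] (u i 2 * v j 1))
  f_normal : IsNormal f
  f_cocycle : IsCocycle toWeakAction f
  f_twisted : IsTwistedModule toWeakAction f

namespace CrossedProduct

variable {E : Type} [Ring E] [Algebra k E] (S : CrossedProduct k A H E)

/-- The canonical map `A → E`, `a ↦ a # 1`. -/
def aE : A →ₗ[k] E := S.ι.toLinearMap ∘ₗ (TensorProduct.mk k A H).flip 1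

/-- The canonical map `H → E`, `h ↦ 1 # h`. -/
def hE : H →ₗ[k] E := S.ι.toLinearMap ∘ₗ (TensorProduct.mk k A H) 1

end CrossedProduct


/-- `IsConvInverse f g` says that `g` is the convolution inverse of `f` in the
convolution algebra `Hom_k(H ⊗ H, A)`, i.e. `f * g = g * f = ε ⊗ ε · 1_A`. -/
def IsConvInverse (f g : H →ₗ[k] H →ₗ[k] A) : Prop :=
  ∀ (h l : H) (N M : ℕ) (u : Fin N → Fin 2 → H) (v : Fin M → Fin 2 → H),
    SRep k 1 h N u → SRep k 1 l M v →
    (∑ i, ∑ j, f (u i 0) (v j 0) * g (u i 1) (v j 1)) =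
        (Coalgebra.counit (R := k) h * Coalgebra.counit (R := k) l) • (1 : A) ∧
    (∑ i, ∑ j, g (u i 0) (v j 0) * f (u i 1) (v j 1)) =
        (Coalgebra.counit (R := k) h * Coalgebra.counit (R := k) l) • (1 : A)

section Aux

open Coalgebra HopfAlgebra WithConv

/-- For an algebra hom. -/
lemma conv_alg_S {B : Type} [Ring B] [Algebra k B] (φ : H →ₐ[k] B) :
    toConv φ.toLinearMap * toConv (φ.toLinearMap ∘ₗ antipode k) = 1 := by
  have h := LinearMap.algHom_comp_convMul_distrib φ (toConv LinearMap.id)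
    (toConv (antipode k (A := H)))
  rw [LinearMap.id_mul_antipode] at h
  apply WithConv.ext
  simp only [LinearMap.comp_id] at h
  rw [← h]
  ext x; simp

lemma conv_S_alg {B : Type} [Ring B] [Algebra k B] (φ : H →ₐ[k] B) :
    toConv (φ.toLinearMap ∘ₗ antipode k) * toConv φ.toLinearMap = 1 := by
  have h := LinearMap.algHom_comp_convMul_distrib φ (toConv (antipode k (A := H)))
    (toConv LinearMap.id)
  rw [LinearMap.antipode_mul_id] at h
  apply WithConv.ext
  simp only [LinearMap.comp_id] at h
  rw [← h]
  ext x; simp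

lemma conv_S_anti {B : Type} [Ring B] [Algebra k B] (p q d : H →ₐ[k] B)
    (h : toConv d.toLinearMap = toConv p.toLinearMap * toConv q.toLinearMap) :
    toConv (d.toLinearMap ∘ₗ antipode k) =
      toConv (q.toLinearMap ∘ₗ antipode k) * toConv (p.toLinearMap ∘ₗ antipode k) := by
  apply left_inv_eq_right_inv (conv_S_alg d)
  rw [h, mul_assoc, ← mul_assoc (toConv q.toLinearMap), conv_alg_S, one_mul, conv_alg_S]

lemma comul_S (h : H) : comul (R := k) (antipode k h) =
    TensorProduct.comm k H H (TensorProduct.map (antipode k) (antipode k) (comul (R := k) h)) := by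
  have := conv_S_anti (k := k) (H := H) Algebra.TensorProduct.includeLeft
    Algebra.TensorProduct.includeRight (Bialgebra.comulAlgHom k H) (by
      ext x
      simp only [(ℛ k x).convMul_apply]
      simp [(ℛ k x).eq])
  have := congr($this h)
  simp only [(ℛ k h).convMul_apply] at this
  simp at this
  rw [this, ← (ℛ k h).eq]
  simp

lemma collapse (h : H) : LinearMap.lTensor (H ⊗[k] H) (LinearMap.mul' k H)
      (comul (R := k) (LinearMap.lTensor H (antipode k) (comul (R := k) h))) =
    (LinearMap.lTensor H (antipode k) (comul (R := k) h)) ⊗ₜ[k] (1 : H) := by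
  let i1 : H →ₐ[k] (H ⊗[k] H) ⊗[k] H := Algebra.TensorProduct.includeLeft.comp
    Algebra.TensorProduct.includeLeft
  let i2 : H →ₐ[k] (H ⊗[k] H) ⊗[k] H := 
    (Algebra.TensorProduct.includeLeft (R := k) (S := k) (A := H ⊗[k] H) (B := H)).comp
    Algebra.TensorProduct.includeRight
  let i3 : H →ₐ[k] (H ⊗[k] H) ⊗[k] H := Algebra.TensorProduct.includeRight
  let d2 : H →ₐ[k] (H ⊗[k] H) ⊗[k] H :=
    (Algebra.TensorProduct.map Algebra.TensorProduct.includeRight (AlgHom.id k H)).comp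
      (Bialgebra.comulAlgHom k H)
  have hd2 : toConv d2.toLinearMap = toConv i2.toLinearMap * toConv i3.toLinearMap := by
    ext x
    simp only [(ℛ k x).convMul_apply]
    simp [d2, i2, i3]
    rw [← (ℛ k x).eq]
    simp
  have h2 := conv_S_anti i2 i3 d2 hd2
  have key : toConv i1.toLinearMap * toConv i3.toLinearMap * toConv (d2.toLinearMap ∘ₗ antipode k)
      = toConv i1.toLinearMap * toConv (i2.toLinearMap ∘ₗ antipode k) := by
    rw [h2, mul_assoc, ← mul_assoc (toConv i3.toLinearMap), conv_alg_S, one_mul]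
  have key := congr($key h)
  have pure : ∀ x l : H, LinearMap.lTensor (H ⊗[k] H) (LinearMap.mul' k H)
      (comul (R := k) (x ⊗ₜ[k] l)) =
      (toConv i1.toLinearMap * toConv i3.toLinearMap) x * d2 l := by
    intro x l
    rw [(ℛ k x).convMul_apply, hd2 ▸ (ℛ k l).convMul_apply (toConv i2.toLinearMap) (toConv i3.toLinearMap) |> (show d2 l = _ from ·)]
    rw [TensorProduct.comul_tmul, ← (ℛ k x).eq, ← (ℛ k l).eq]
    simp [i1, i2, i3, TensorProduct.sum_tmul, TensorProduct.tmul_sum, Finset.sum_mul_sum]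
    exact Finset.sum_comm
  rw [(ℛ k h).convMul_apply, (ℛ k h).convMul_apply] at key
  simp only [← (ℛ k h).eq, map_sum, LinearMap.lTensor_tmul, pure, TensorProduct.sum_tmul]
  simpa [i1, i2] using key


lemma srep1 {h : H} {N : ℕ} {u : Fin N → Fin 2 → H} (hu : SRep k 1 h N u) :
    comul (R := k) h = ∑ i, u i 0 ⊗ₜ[k] u i 1 := by
  have h1 : LinearMap.lTensor H (TensorProduct.rid k H).symm.toLinearMap (comul (R := k) h) =
      ∑ i, u i 0 ⊗ₜ[k] (u i 1 ⊗ₜ[k] (1 : k)) := hu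
  have h2 := congr(LinearMap.lTensor H (TensorProduct.rid k H).toLinearMap $h1)
  rw [← LinearMap.lTensor_comp_apply] at h2
  simpa using h2

lemma srep2 {h : H} {N : ℕ} {u : Fin N → Fin 3 → H} (hu : SRep k 2 h N u) :
    LinearMap.lTensor H (comul (R := k)) (comul (R := k) h) =
      ∑ i, u i 0 ⊗ₜ[k] (u i 1 ⊗ₜ[k] u i 2) := by
  have h1 : LinearMap.lTensor H
      (LinearMap.lTensor H (TensorProduct.rid k H).symm.toLinearMap ∘ₗ comul (R := k))
      (comul (R := k) h) =
      ∑ i, u i 0 ⊗ₜ[k] (u i 1 ⊗ₜ[k] (u i 2 ⊗ₜ[k] (1 : k))) := hu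
  have h2 := congr(LinearMap.lTensor H (LinearMap.lTensor H (TensorProduct.rid k H).toLinearMap) $h1)
  rw [← LinearMap.lTensor_comp_apply, ← LinearMap.comp_assoc, ← LinearMap.lTensor_comp] at h2
  simpa using h2

lemma srep3 {h : H} {N : ℕ} {u : Fin N → Fin 4 → H} (hu : SRep k 3 h N u) :
    LinearMap.lTensor H (LinearMap.lTensor H (comul (R := k)) ∘ₗ comul (R := k))
      (comul (R := k) h) =
      ∑ i, u i 0 ⊗ₜ[k] (u i 1 ⊗ₜ[k] (u i 2 ⊗ₜ[k] u i 3)) := by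
  have h1 : LinearMap.lTensor H (LinearMap.lTensor H
      (LinearMap.lTensor H (TensorProduct.rid k H).symm.toLinearMap ∘ₗ comul (R := k)) ∘ₗ
        comul (R := k))
      (comul (R := k) h) =
      ∑ i, u i 0 ⊗ₜ[k] (u i 1 ⊗ₜ[k] (u i 2 ⊗ₜ[k] (u i 3 ⊗ₜ[k] (1 : k)))) := hu
  have h2 := congr(LinearMap.lTensor H (LinearMap.lTensor H
    (LinearMap.lTensor H (TensorProduct.rid k H).toLinearMap)) $h1)
  rw [← LinearMap.lTensor_comp_apply, ← LinearMap.comp_assoc, ← LinearMap.lTensor_comp,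
    ← LinearMap.comp_assoc, ← LinearMap.lTensor_comp] at h2
  simpa using h2

lemma exists_tp (n : ℕ) (x : Tpow k H (n + 1)) :
    ∃ (N : ℕ) (u : Fin N → Fin (n + 1) → H), x = ∑ i, tp k (u i) := by
  induction n with
  | zero =>
    change H ⊗[k] k at x
    refine ⟨1, fun _ _ => TensorProduct.rid k H x, ?_⟩
    rw [Fin.sum_univ_one]
    exact ((TensorProduct.rid k H).symm_apply_apply x).symm
  | succ n ih =>
    change H ⊗[k] Tpow k H (n + 1) at x
    induction x using TensorProduct.induction_on with
    | zero => exact ⟨0, Fin.elim0, by simp; rfl⟩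
    | tmul a y =>
      obtain ⟨N, u, rfl⟩ := ih y
      refine ⟨N, fun i => Fin.cons a (u i), ?_⟩
      exact TensorProduct.tmul_sum _ _ _
    | add x y hx hy =>
      obtain ⟨N, u, hu⟩ := hx
      obtain ⟨M, v, hv⟩ := hy
      refine ⟨N + M, Fin.append u v, ?_⟩
      rw [Fin.sum_univ_add]
      simp only [Fin.append_left, Fin.append_right]
      exact congr($hu + $hv)

lemma exists_srep (n : ℕ) (h : H) :
    ∃ (N : ℕ) (u : Fin N → Fin (n + 1) → H), SRep k n h N u :=
  exists_tp n _

lemma coassoc_rep (h : H) :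
    LinearMap.lTensor H (LinearMap.lTensor H (comul (R := k)) ∘ₗ comul (R := k))
      (comul (R := k) h) =
    TensorProduct.assoc k H H (H ⊗[k] H) 
      (TensorProduct.map (comul (R := k)) (comul (R := k)) (comul (R := k) h)) := by
  have e : TensorProduct.map (comul (R := k) (A := H)) (comul (R := k) (A := H)) =
    LinearMap.lTensor (H ⊗[k] H) (comul (R := k)) ∘ₗ LinearMap.rTensor H (comul (R := k)) := by
    ext; simp
  rw [LinearMap.lTensor_comp, LinearMap.comp_apply, ← Coalgebra.coassoc_apply, e,
    LinearMap.comp_apply]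
  generalize LinearMap.rTensor H (comul (R := k)) (comul (R := k) h) = y
  exact congr($(show LinearMap.lTensor H (LinearMap.lTensor H (comul (R := k))) ∘ₗ
    (TensorProduct.assoc k H H H).toLinearMap = (TensorProduct.assoc k H H (H ⊗[k] H)).toLinearMap
      ∘ₗ LinearMap.lTensor (H ⊗[k] H) (comul (R := k)) from by ext; simp) y)

lemma rep4 {h : H} {N : ℕ} {u : Fin N → Fin 4 → H} (hu : SRep k 3 h N u) :
    TensorProduct.map (comul (R := k)) (comul (R := k)) (comul (R := k) h) =
      ∑ i, (u i 0 ⊗ₜ[k] u i 1) ⊗ₜ[k] (u i 2 ⊗ₜ[k] u i 3) := by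
  apply (TensorProduct.assoc k H H (H ⊗[k] H)).injective
  rw [← coassoc_rep, srep3 hu]
  simp

lemma rep4' {h : H} {N : ℕ} {u : Fin N → Fin 4 → H} (hu : SRep k 3 h N u) :
    LinearMap.rTensor H (LinearMap.lTensor H (comul (R := k)) ∘ₗ comul (R := k))
      (comul (R := k) h) =
      ∑ i, (u i 0 ⊗ₜ[k] (u i 1 ⊗ₜ[k] u i 2)) ⊗ₜ[k] u i 3 := by
  apply (TensorProduct.assoc k H (H ⊗[k] H) H).injective
  apply (LinearEquiv.lTensor H (TensorProduct.assoc k H H H)).injective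
  simp only [map_sum, TensorProduct.assoc_tmul, LinearEquiv.lTensor_tmul]
  rw [← srep3 hu, LinearMap.rTensor_comp, LinearMap.comp_apply]
  have e : ∀ y : (H ⊗[k] H) ⊗[k] H, TensorProduct.assoc k H (H ⊗[k] H) H
      (LinearMap.rTensor H (LinearMap.lTensor H (comul (R := k))) y) =
      LinearMap.lTensor H (LinearMap.rTensor H (comul (R := k)))
        (TensorProduct.assoc k H H H y) := by
    intro y
    exact congr($(show (TensorProduct.assoc k H (H ⊗[k] H) H).toLinearMap ∘ₗ
      (LinearMap.rTensor H (LinearMap.lTensor H (comul (R := k)))) =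
      LinearMap.lTensor H (LinearMap.rTensor H (comul (R := k))) ∘ₗ
        (TensorProduct.assoc k H H H).toLinearMap from by ext; simp) y)
  rw [e, Coalgebra.coassoc_apply]
  change LinearMap.lTensor H (TensorProduct.assoc k H H H).toLinearMap _ = _
  rw [← LinearMap.lTensor_comp_apply, ← LinearMap.lTensor_comp_apply, LinearMap.comp_assoc,
    ← Coalgebra.coassoc]


variable {E : Type} [Ring E] [Algebra k E] (S : CrossedProduct k A H E)

lemma srep_one2 : SRep k 2 (1 : H) 1 (fun _ _ => 1) := by
  have h1 : LinearMap.lTensor H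
      (LinearMap.lTensor H (TensorProduct.rid k H).symm.toLinearMap ∘ₗ comul (R := k))
      (comul (R := k) (1 : H)) = (1 : H) ⊗ₜ[k] ((1 : H) ⊗ₜ[k] ((1 : H) ⊗ₜ[k] (1 : k))) := by
    simp [Algebra.TensorProduct.one_def]
  unfold SRep
  rw [Fin.sum_univ_one]
  exact h1

lemma srep_one1 : SRep k 1 (1 : H) 1 (fun _ _ => 1) := by
  have h1 : LinearMap.lTensor H (TensorProduct.rid k H).symm.toLinearMap 
      (comul (R := k) (1 : H)) = (1 : H) ⊗ₜ[k] ((1 : H) ⊗ₜ[k] (1 : k)) := by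
    simp [Algebra.TensorProduct.one_def]
  unfold SRep
  rw [Fin.sum_univ_one]
  exact h1

lemma j_mul (a b : A) (h : H) : S.ι (a ⊗ₜ[k] 1) * S.ι (b ⊗ₜ[k] h) = S.ι ((a * b) ⊗ₜ[k] h) := by
  obtain ⟨M, v, hv⟩ := exists_srep (k := k) 1 h
  rw [S.ι_mul a b 1 h 1 M _ v srep_one2 hv]
  have h1 := congr((TensorProduct.lid k H) (LinearMap.rTensor H (counit (R := k)) $(srep1 hv)))
  simp only [rTensor_counit_comul, map_sum, LinearMap.rTensor_tmul, TensorProduct.lid_tmul,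
    one_smul] at h1
  simp only [S.one_act, (S.f_normal _).2, one_mul, Fin.sum_univ_one]
  conv_rhs => rw [h1]
  simp [TensorProduct.tmul_sum, TensorProduct.tmul_smul, TensorProduct.smul_tmul']

/-- The algebra hom `A → E`. -/
def jAlg : A →ₐ[k] E := AlgHom.ofLinearMap S.aE S.ι_one (fun a b => (j_mul S a b 1).symm)

lemma jAlg_apply (a : A) : jAlg S a = S.ι (a ⊗ₜ[k] 1) := rfl

lemma hE_apply (h : H) : S.hE h = S.ι (1 ⊗ₜ[k] h) := rfl

lemma ι_eq (a : A) (h : H) : S.ι (a ⊗ₜ[k] h) = jAlg S a * S.hE h := by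
  rw [jAlg_apply, hE_apply, j_mul, mul_one]

lemma hE_j (h : H) (b : A) : S.hE h * jAlg S b =
    (toConv ((jAlg S).toLinearMap ∘ₗ S.act.flip b) * toConv S.hE) h := by
  obtain ⟨N, u, hu⟩ := exists_srep (k := k) 2 h
  rw [hE_apply, jAlg_apply, S.ι_mul 1 b h 1 N 1 u _ hu srep_one1]
  have h1 := congr(LinearMap.lTensor H ((TensorProduct.lid k H).toLinearMap ∘ₗ
    LinearMap.rTensor H (counit (R := k))) $(srep2 hu))
  rw [← LinearMap.lTensor_comp_apply] at h1
  have e : ((TensorProduct.lid k H).toLinearMap ∘ₗ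
    LinearMap.rTensor H (counit (R := k))) ∘ₗ comul = LinearMap.id := by
    ext; simp
  rw [e] at h1
  simp only [LinearMap.lTensor_id, LinearMap.id_apply, map_sum, LinearMap.lTensor_tmul,
    LinearMap.comp_apply, LinearMap.rTensor_tmul, LinearEquiv.coe_coe, TensorProduct.lid_tmul] at h1
  rw [LinearMap.convMul_apply, h1]
  simp [(S.f_normal _).1, ← ι_eq, ← TensorProduct.smul_tmul']

lemma hE_hE (h l : H) : S.hE h * S.hE l =
    (toConv ((jAlg S).toLinearMap ∘ₗ TensorProduct.lift S.f) *
      toConv (S.hE ∘ₗ LinearMap.mul' k H)) (h ⊗ₜ[k] l) := by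
  obtain ⟨N, u, hu⟩ := exists_srep (k := k) 2 h
  obtain ⟨M, v, hv⟩ := exists_srep (k := k) 1 l
  rw [hE_apply, hE_apply, S.ι_mul 1 1 h l N M u v hu hv]
  have h1 := congr((TensorProduct.lid k (H ⊗[k] H)) (LinearMap.rTensor _ (counit (R := k)) $(srep2 hu)))
  have e : ∀ y : H ⊗[k] H, (TensorProduct.lid k (H ⊗[k] H)) (LinearMap.rTensor _ (counit (R := k))
      (LinearMap.lTensor H (comul (R := k)) y)) = comul (R := k)
        ((TensorProduct.lid k H) (LinearMap.rTensor _ (counit (R := k)) y)) := by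
    intro y
    exact congr($(show (TensorProduct.lid k (H ⊗[k] H)).toLinearMap ∘ₗ
      (LinearMap.rTensor _ (counit (R := k)) ∘ₗ (LinearMap.lTensor H (comul (R := k)))) = 
      comul (R := k) ∘ₗ ((TensorProduct.lid k H).toLinearMap ∘ₗ
        (LinearMap.rTensor _ (counit (R := k)))) from by ext; simp) y)
  rw [e, rTensor_counit_comul] at h1
  simp only [TensorProduct.lid_tmul, one_smul, map_sum, LinearMap.rTensor_tmul] at h1
  rw [LinearMap.convMul_apply, TensorProduct.comul_tmul, h1, srep1 hv]
  simp only [TensorProduct.sum_tmul, TensorProduct.tmul_sum, map_sum]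
  rw [Finset.sum_comm]
  simp only [← TensorProduct.smul_tmul', map_smul]
  simp [S.act_one, ι_eq]

/-- `w` data. -/
lemma GF (finv : H →ₗ[k] H →ₗ[k] A) (hfinv : IsConvInverse S.f finv) :
    toConv (TensorProduct.lift finv) * toConv (TensorProduct.lift S.f) = 1 := by
  apply WithConv.ext
  ext h l
  obtain ⟨N, u, hu⟩ := exists_srep (k := k) 1 h
  obtain ⟨M, v, hv⟩ := exists_srep (k := k) 1 l
  have h1 := (hfinv h l N M u v hu hv).2
  simp only [TensorProduct.AlgebraTensorModule.curry_apply, LinearMap.restrictScalars_self,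
    TensorProduct.curry_apply]
  rw [LinearMap.convMul_apply, TensorProduct.comul_tmul, srep1 hu, srep1 hv, LinearMap.convOne_apply]
  simp only [TensorProduct.sum_tmul, TensorProduct.tmul_sum, map_sum]
  rw [Finset.sum_comm]
  simpa [Algebra.algebraMap_eq_smul_one, mul_comm, mul_smul] using h1

lemma conv_G (finv : H →ₗ[k] H →ₗ[k] A) (hfinv : IsConvInverse S.f finv) :
    toConv ((jAlg S).toLinearMap ∘ₗ TensorProduct.lift finv) *
      toConv (LinearMap.mul' k E ∘ₗ TensorProduct.map S.hE S.hE) =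
      toConv (S.hE ∘ₗ LinearMap.mul' k H) := by
  have h1 : toConv (LinearMap.mul' k E ∘ₗ TensorProduct.map S.hE S.hE) =
    (toConv ((jAlg S).toLinearMap ∘ₗ TensorProduct.lift S.f) *
      toConv (S.hE ∘ₗ LinearMap.mul' k H)) := by
    apply WithConv.ext
    ext h l
    exact hE_hE S h l
  have h2 := LinearMap.algHom_comp_convMul_distrib (jAlg S) (toConv (TensorProduct.lift finv))
    (toConv (TensorProduct.lift S.f))
  rw [GF S finv hfinv] at h2
  have h3 : toConv ((jAlg S).toLinearMap ∘ₗ TensorProduct.lift finv) * 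
      toConv ((jAlg S).toLinearMap ∘ₗ TensorProduct.lift S.f) = 1 := by
    apply WithConv.ext
    rw [← h2]
    ext; simp
  rw [h1, ← mul_assoc, h3, one_mul]

lemma left_inv (finv : H →ₗ[k] H →ₗ[k] A) (hfinv : IsConvInverse S.f finv) 
    (h : H) (N : ℕ) (u : Fin N → Fin 4 → H) (hu : SRep k 3 h N u) :
    (∑ i, S.ι ((finv (antipode k (u i 1)) (u i 2)) ⊗ₜ[k] antipode k (u i 0)) *
          S.ι ((1 : A) ⊗ₜ[k] u i 3) = counit (R := k) h • (1 : E)) := by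
  have h1 := congr(($(conv_G S finv hfinv)).ofConv
    (LinearMap.rTensor H (antipode k) (comul (R := k) h)))
  have e : comul (R := k) (LinearMap.rTensor H (antipode k) (comul (R := k) h)) =
      TensorProduct.AlgebraTensorModule.tensorTensorTensorComm k k k k H H H H (LinearMap.rTensor (H ⊗[k] H)
        ((TensorProduct.comm k H H).toLinearMap ∘ₗ TensorProduct.map (antipode k) (antipode k))
        (TensorProduct.map (comul (R := k)) (comul (R := k)) (comul (R := k) h))) := by
    generalize comul (R := k) h = y
    induction y using TensorProduct.induction_on with
    | zero => simp
    | add x y hx hy => simp only [map_add, hx, hy]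
    | tmul x y =>
      simp only [LinearMap.rTensor_tmul, TensorProduct.map_tmul, TensorProduct.comul_tmul, comul_S,
        LinearMap.comp_apply, LinearEquiv.coe_coe]
  rw [LinearMap.convMul_apply, e, rep4 hu] at h1
  have e2 : LinearMap.mul' k H (LinearMap.rTensor H (antipode k) (comul (R := k) h)) =
    algebraMap k H (counit h) := mul_antipode_rTensor_comul_apply h
  simp only [LinearMap.comp_apply, e2] at h1
  simp only [Algebra.algebraMap_eq_smul_one, map_smul, hE_apply, S.ι_one] at h1
  rw [← h1]
  simp [ι_eq, mul_assoc]

lemma conv_hE_S : toConv S.hE * toConv (S.hE ∘ₗ antipode k) =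
    toConv ((jAlg S).toLinearMap ∘ₗ (TensorProduct.lift S.f ∘ₗ LinearMap.lTensor H (antipode k) ∘ₗ
      comul (R := k))) := by
  apply WithConv.ext
  ext h
  have h1 : (LinearMap.mul' k E ∘ₗ TensorProduct.map S.hE S.hE) =
    (toConv ((jAlg S).toLinearMap ∘ₗ TensorProduct.lift S.f) *
      toConv (S.hE ∘ₗ LinearMap.mul' k H)).ofConv := by
    ext h l
    exact hE_hE S h l
  have h2 := congr($h1 (LinearMap.lTensor H (antipode k) (comul (R := k) h)))
  have e : TensorProduct.map ((jAlg S).toLinearMap ∘ₗ TensorProduct.lift S.f)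
      (S.hE ∘ₗ LinearMap.mul' k H) = TensorProduct.map ((jAlg S).toLinearMap ∘ₗ
        TensorProduct.lift S.f) S.hE ∘ₗ LinearMap.lTensor (H ⊗[k] H) (LinearMap.mul' k H) := by
    rw [LinearMap.lTensor, ← TensorProduct.map_comp, LinearMap.comp_id]
  rw [LinearMap.convMul_apply, e, LinearMap.comp_apply _ (LinearMap.lTensor _ _), collapse] at h2
  rw [LinearMap.convMul_apply]
  have e3 : TensorProduct.map S.hE (S.hE ∘ₗ antipode k) =
      TensorProduct.map S.hE S.hE ∘ₗ LinearMap.lTensor H (antipode k) := by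
    rw [LinearMap.lTensor, ← TensorProduct.map_comp, LinearMap.comp_id]
  rw [e3]
  refine h2.trans ?_
  simp [hE_apply, S.ι_one]

lemma mem_range (b : A) (h : H) :
    LinearMap.mul' k E (TensorProduct.map (LinearMap.mulRight k (jAlg S b) ∘ₗ S.hE)
      (S.hE ∘ₗ antipode k) (comul (R := k) h)) ∈ LinearMap.range (jAlg S).toLinearMap := by
  have h1 : toConv (LinearMap.mulRight k (jAlg S b) ∘ₗ S.hE) =
      toConv ((jAlg S).toLinearMap ∘ₗ S.act.flip b) * toConv S.hE := by
    apply WithConv.ext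
    ext h
    exact hE_j S h b
  change (toConv (LinearMap.mulRight k (jAlg S b) ∘ₗ S.hE) * toConv (S.hE ∘ₗ antipode k)) h ∈ _
  rw [h1, mul_assoc, conv_hE_S]
  rw [← LinearMap.algHom_comp_convMul_distrib (jAlg S) (toConv (S.act.flip b)) (toConv _)]
  exact ⟨_, rfl⟩

lemma range_all (finv : H →ₗ[k] H →ₗ[k] A) (h : H) (N : ℕ) (u : Fin N → Fin 4 → H)
    (hu : SRep k 3 h N u) :
    ∑ i, S.ι ((1 : A) ⊗ₜ[k] u i 0) *
          S.ι ((finv (antipode k (u i 2)) (u i 3)) ⊗ₜ[k] antipode k (u i 1)) ∈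
      LinearMap.range (jAlg S).toLinearMap := by
  let Ω : (H ⊗[k] H) ⊗[k] (H ⊗[k] H) →ₗ[k] E :=
    LinearMap.mul' k E ∘ₗ TensorProduct.map (LinearMap.mul' k E) LinearMap.id ∘ₗ
    (TensorProduct.rightComm k E E E).toLinearMap ∘ₗ
    TensorProduct.map (TensorProduct.map S.hE (S.hE ∘ₗ antipode k))
      ((jAlg S).toLinearMap ∘ₗ TensorProduct.lift finv ∘ₗ LinearMap.rTensor H (antipode k))
  have hΩ : ∀ x y z w, Ω ((x ⊗ₜ[k] y) ⊗ₜ[k] (z ⊗ₜ[k] w)) =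
      S.hE x * jAlg S (finv (antipode k z) w) * S.hE (antipode k y) := by
    intro x y z w
    simp [Ω]
  have e : ∑ i, S.ι ((1 : A) ⊗ₜ[k] u i 0) *
          S.ι ((finv (antipode k (u i 2)) (u i 3)) ⊗ₜ[k] antipode k (u i 1)) =
      Ω (TensorProduct.map (comul (R := k)) (comul (R := k)) (comul (R := k) h)) := by
    rw [rep4 hu]
    simp [hΩ, ι_eq, mul_assoc]
  rw [e]
  have key : ∀ (x : H) (z w : H), Ω (comul (R := k) x ⊗ₜ[k] (z ⊗ₜ[k] w)) ∈
      LinearMap.range (jAlg S).toLinearMap := by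
    intro x z w
    convert mem_range S (finv (antipode k z) w) x using 1
    rw [← (ℛ k x).eq]
    simp [TensorProduct.sum_tmul, hΩ]
  rw [← (ℛ k h).eq]
  simp only [map_sum, TensorProduct.map_tmul]
  refine Submodule.sum_mem _ fun i _ => ?_
  rw [← (ℛ k ((ℛ k h).right i)).eq]
  simp only [TensorProduct.tmul_sum, map_sum]
  exact Submodule.sum_mem _ fun i _ => key _ _ _

lemma right_inv (finv : H →ₗ[k] H →ₗ[k] A) (hfinv : IsConvInverse S.f finv) 
    (h : H) (N : ℕ) (u : Fin N → Fin 4 → H) (hu : SRep k 3 h N u) :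
    ∑ i, S.ι ((1 : A) ⊗ₜ[k] u i 0) *
          S.ι ((finv (antipode k (u i 2)) (u i 3)) ⊗ₜ[k] antipode k (u i 1)) =
      counit (R := k) h • (1 : E) := by
  let Λ : H ⊗[k] (H ⊗[k] H) →ₗ[k] E := S.ι.toLinearMap ∘ₗ
    TensorProduct.map (TensorProduct.lift finv ∘ₗ LinearMap.rTensor H (antipode k)) (antipode k) ∘ₗ
    (TensorProduct.comm k H (H ⊗[k] H)).toLinearMap
  have hΛ : ∀ x y z, Λ (x ⊗ₜ[k] (y ⊗ₜ[k] z)) =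
      S.ι ((finv (antipode k y) z) ⊗ₜ[k] antipode k x) := by
    intro x y z; simp [Λ]
  let g : H →ₗ[k] E := Λ ∘ₗ (LinearMap.lTensor H (comul (R := k)) ∘ₗ comul (R := k))
  have hl : toConv g * toConv S.hE = 1 := by
    apply WithConv.ext
    ext h
    obtain ⟨N, u, hu⟩ := exists_srep (k := k) 3 h
    have h1 := left_inv S finv hfinv h N u hu
    rw [LinearMap.convMul_apply, LinearMap.convOne_apply, Algebra.algebraMap_eq_smul_one, ← h1]
    have e : TensorProduct.map g S.hE = TensorProduct.map Λ S.hE ∘ₗ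
        LinearMap.rTensor H (LinearMap.lTensor H (comul (R := k)) ∘ₗ comul (R := k)) := by
      rw [LinearMap.rTensor, ← TensorProduct.map_comp, LinearMap.comp_id]
    rw [e, LinearMap.comp_apply, rep4' hu]
    simp [hΛ, hE_apply]
  have hr : ∀ (h : H) (N : ℕ) (u : Fin N → Fin 4 → H) (hu : SRep k 3 h N u),
      (toConv S.hE * toConv g) h = ∑ i, S.ι ((1 : A) ⊗ₜ[k] u i 0) *
          S.ι ((finv (antipode k (u i 2)) (u i 3)) ⊗ₜ[k] antipode k (u i 1)) := by
    intro h N u hu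
    have e : TensorProduct.map S.hE g = TensorProduct.map S.hE Λ ∘ₗ
        LinearMap.lTensor H (LinearMap.lTensor H (comul (R := k)) ∘ₗ comul (R := k)) := by
      rw [LinearMap.lTensor, ← TensorProduct.map_comp, LinearMap.comp_id]
    rw [LinearMap.convMul_apply, e, LinearMap.comp_apply, srep3 hu]
    simp [hΛ, hE_apply]
  rw [← hr h N u hu]
  let w : H →ₗ[k] E := (toConv S.hE * toConv g).ofConv
  have hw : toConv w * toConv S.hE = toConv S.hE := by
    change toConv S.hE * toConv g * toConv S.hE = _
    rw [mul_assoc, hl, mul_one]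
  let π : E →ₗ[k] A := (TensorProduct.rid k A).toLinearMap ∘ₗ
    LinearMap.lTensor A (counit (R := k)) ∘ₗ S.ι.symm.toLinearMap
  have hπ : ∀ a x, π (jAlg S a * S.hE x) = counit (R := k) x • a := by
    intro a x
    rw [← ι_eq]
    simp [π]
  have hq : ∀ x, w x = jAlg S (π (w x)) := by
    intro x
    obtain ⟨N, u, hu⟩ := exists_srep (k := k) 3 x
    obtain ⟨a, ha⟩ := range_all S finv x N u hu
    have ha : jAlg S a = w x := by rw [← hr x N u hu] at ha; exact ha
    have : π (jAlg S a) = a := by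
      have := hπ a 1
      rwa [hE_apply, S.ι_one, mul_one, Bialgebra.counit_one, one_smul] at this
    rw [← ha, this]
  have h2 := congr(π ($hw h))
  rw [(ℛ k h).convMul_apply] at h2
  have h3 := hπ 1 h
  rw [map_one, one_mul] at h3
  have h4 : π (w h) = counit (R := k) h • (1 : A) := by
    rw [← h3, ← h2, map_sum]
    have : ∀ x y, π (w x * S.hE y) = counit (R := k) y • π (w x) := by
      intro x y
      rw [hq x, hπ, ← hq x]
    simp only [this]
    have h5 := congr(TensorProduct.rid k A (LinearMap.rTensor k (π ∘ₗ w)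
      $(sum_tmul_counit_eq (ℛ k h))))
    simp only [map_sum, LinearMap.rTensor_tmul, TensorProduct.rid_tmul, one_smul,
      LinearMap.comp_apply] at h5
    exact h5.symm
  change w h = _
  rw [hq h, h4, map_smul, map_one]

end Aux

/-- **Convolution invertibility of `h ↦ 1 # h`.**
Let `E = A #_f H` be a crossed product with convolution invertible cocycle `f`
(with convolution inverse `f⁻¹`).  Then the map `γ : H → E`, `γ(h) = 1 # h`, is
convolution invertible in `Hom_k(H, E)`, with convolution inverse
`γ⁻¹(h) = (1 # h)⁻¹ = f⁻¹(S(h⁽²⁾), h⁽³⁾) # S(h⁽¹⁾)`; that is,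
`γ(h⁽¹⁾) γ⁻¹(h⁽²⁾) = γ⁻¹(h⁽¹⁾) γ(h⁽²⁾) = ε(h) · (1 # 1)` for all `h ∈ H`. -/
theorem conv_invertible_one_smash
    {k A H E : Type} [CommRing k] [Ring A] [Algebra k A] [Ring H] [HopfAlgebra k H]
    [Ring E] [Algebra k E] (S : CrossedProduct k A H E)
    (finv : H →ₗ[k] H →ₗ[k] A) (hfinv : IsConvInverse S.f finv) :
    ∀ (h : H) (N : ℕ) (u : Fin N → Fin 4 → H), SRep k 3 h N u →
      (∑ i, S.ι ((1 : A) ⊗ₜ[k] u i 0) *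
          S.ι ((finv (HopfAlgebra.antipode (R := k) (u i 2)) (u i 3)) ⊗ₜ[k]
            HopfAlgebra.antipode (R := k) (u i 1)) =
        Coalgebra.counit (R := k) h • (1 : E)) ∧
      (∑ i, S.ι ((finv (HopfAlgebra.antipode (R := k) (u i 1)) (u i 2)) ⊗ₜ[k]
            HopfAlgebra.antipode (R := k) (u i 0)) *
          S.ι ((1 : A) ⊗ₜ[k] u i 3) =
        Coalgebra.counit (R := k) h • (1 : E)) := by
  intro h N u hu
  exact ⟨right_inv S finv hfinv h N u hu, left_inv S finv hfinv h N u hu⟩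

end HopfCrossed
end
end

section
/- Let k be a field and E = A#_f H a crossed product with convolution invertible cocycle f. Then the left global dimension of E satisfies gl.dim(E) ≤ gl.dim(A) + gl.dim(H), where gl.dim denotes the left global dimension (the supremum of projective dimensions of left modules). -/
open TensorProduct

noncomputable section

namespace HopfCrossed

variable (k : Type) [CommRing k]

variable {A H : Type} [Ring A] [Algebra k A] [Ring H] [HopfAlgebra k H]
variable {k}

/-- `PdLE R n M` : the left `R`-module `M` has projective dimension at most `n`. -/
def PdLE (R : Type) [Ring R] : ℕ → ∀ (M : Type) [AddCommGroup M] [Module R M], Prop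
  | 0, M, _, _ => Module.Projective R M
  | n + 1, M, _, _ => ∃ (P : Type) (_ : AddCommGroup P) (_ : Module R P)
      (p : P →ₗ[R] M), Module.Projective R P ∧ Function.Surjective p ∧
        PdLE R n (LinearMap.ker p)

/-- `GlDimLE R n` : the left global dimension of the ring `R` is at most `n`,
i.e. every left `R`-module has projective dimension at most `n`. -/
def GlDimLE (R : Type) [Ring R] (n : ℕ) : Prop :=
  ∀ (M : Type) [AddCommGroup M] [Module R M], PdLE R n M

open CategoryTheory in
theorem pdLE_of_has {R : Type} [Ring R] : ∀ (n : ℕ) (M : Type) [AddCommGroup M] [Module R M],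
    HasProjectiveDimensionLT (ModuleCat.of R M) (n + 1) → PdLE R n M
  | 0, M, _, _, h => by
    have : Projective (ModuleCat.of R M) := inferInstance
    exact (IsProjective.iff_projective M).2 this
  | n + 1, M, _, _, h => by
    refine ⟨M →₀ R, inferInstance, inferInstance, Finsupp.linearCombination R id, inferInstance,
      Finsupp.linearCombination_id_surjective R M, pdLE_of_has n _ ?_⟩
    have hs := LinearMap.shortExact_shortComplexKer
      (Finsupp.linearCombination_id_surjective R M)
    refine hs.hasProjectiveDimensionLT_X₁ (n + 1) ?_ h
    have : Projective (ModuleCat.of R (M →₀ R)) :=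
      (IsProjective.iff_projective (M →₀ R)).1 inferInstance
    have h1 : HasProjectiveDimensionLT (ModuleCat.of R (M →₀ R)) 1 := inferInstance
    exact hasProjectiveDimensionLT_of_ge _ 1 _ (by omega)

open CategoryTheory in
theorem has_of_pdLE {R : Type} [Ring R] : ∀ (n : ℕ) (M : Type) [AddCommGroup M] [Module R M],
    PdLE R n M → HasProjectiveDimensionLT (ModuleCat.of R M) (n + 1)
  | 0, M, _, _, h => by
    have : Projective (ModuleCat.of R M) := (IsProjective.iff_projective M).1 h
    exact inferInstanceAs (HasProjectiveDimensionLT (ModuleCat.of R M) 1)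
  | n + 1, M, _, _, h => by
    obtain ⟨P, _, _, p, hP, hp, hK⟩ := h
    have hs := LinearMap.shortExact_shortComplexKer hp
    refine hs.hasProjectiveDimensionLT_X₃ (n + 1) (has_of_pdLE n _ hK) ?_
    have : Projective (ModuleCat.of R P) := (IsProjective.iff_projective P).1 hP
    have h1 : HasProjectiveDimensionLT (ModuleCat.of R P) 1 := inferInstance
    exact hasProjectiveDimensionLT_of_ge _ 1 _ (by omega)

/-- injective dimension at most `n`. -/
def IdLE (R : Type) [Ring R] (n : ℕ) (M : Type) [AddCommGroup M] [Module R M] : Prop :=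
  CategoryTheory.HasInjectiveDimensionLT (ModuleCat.of R M) (n + 1)

open CategoryTheory in
theorem idLE_of_glDimLE {R : Type} [Ring R] {n : ℕ} (h : GlDimLE R n)
    (M : Type) [AddCommGroup M] [Module R M] : IdLE R n M := by
  unfold IdLE
  rw [hasInjectiveDimensionLT_iff.{0}]
  intro i hi Y e
  have := has_of_pdLE n Y (h Y)
  exact e.eq_zero_of_hasProjectiveDimensionLT (n + 1) hi

open CategoryTheory in
theorem glDimLE_of_idLE {R : Type} [Ring R] {n : ℕ}
    (h : ∀ (M : Type) [AddCommGroup M] [Module R M], IdLE R n M) : GlDimLE R n := by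
  intro M _ _
  apply pdLE_of_has
  rw [hasProjectiveDimensionLT_iff.{0}]
  intro i hi Y e
  have := h Y
  unfold IdLE at this
  exact e.eq_zero_of_hasInjectiveDimensionLT (n + 1) hi

open CategoryTheory in
theorem IdLE.retract {R : Type} [Ring R] {n : ℕ} {M N : Type} [AddCommGroup M] [Module R M]
    [AddCommGroup N] [Module R N] (h : IdLE R n N) (i : M →ₗ[R] N) (r : N →ₗ[R] M)
    (hir : ∀ x, r (i x) = x) : IdLE R n M := by
  unfold IdLE at *
  have R : Retract (ModuleCat.of R M) (ModuleCat.of R N) :=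
    { i := ModuleCat.ofHom i, r := ModuleCat.ofHom r
      retract := by ext x; exact hir x }
  exact R.hasInjectiveDimensionLT _

open CategoryTheory in
theorem IdLE.mono {R : Type} [Ring R] {n m : ℕ} (hnm : n ≤ m) {M : Type} [AddCommGroup M]
    [Module R M] (h : IdLE R n M) : IdLE R m M := by
  unfold IdLE at *
  exact hasInjectiveDimensionLT_of_ge _ (n + 1) _ (by omega)

open CategoryTheory in
theorem IdLE.of_exact {R : Type} [Ring R] {n : ℕ} {X Y Z : Type} [AddCommGroup X] [Module R X]
    [AddCommGroup Y] [Module R Y] [AddCommGroup Z] [Module R Z]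
    (f : X →ₗ[R] Y) (g : Y →ₗ[R] Z) (hf : Function.Injective f) (hg : Function.Surjective g)
    (hfg : Function.Exact f g) (hY : IdLE R (n + 1) Y) (hZ : IdLE R n Z) : IdLE R (n + 1) X := by
  unfold IdLE at *
  have hs : (ShortComplex.mk (ModuleCat.ofHom f) (ModuleCat.ofHom g)
      (by ext x; exact hfg.apply_apply_eq_zero x)).ShortExact :=
    ModuleCat.shortComplex_shortExact _ hfg hf hg
  exact hs.hasInjectiveDimensionLT_X₁ (n + 1) hZ hY

open CategoryTheory in
theorem IdLE.zero_iff {R : Type} [Ring R] {M : Type} [AddCommGroup M]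
    [Module R M] : IdLE R 0 M ↔ Module.Injective R M := by
  unfold IdLE
  rw [Module.injective_iff_injective_object]
  exact injective_iff_hasInjectiveDimensionLT_one.symm

open CategoryTheory in
theorem IdLE.exists_cosyzygy {R : Type} [Ring R] {n : ℕ} {M : Type} [AddCommGroup M]
    [Module R M] (h : IdLE R (n + 1) M) : ∃ (I : Type) (_ : AddCommGroup I) (_ : Module R I)
      (Q : Type) (_ : AddCommGroup Q) (_ : Module R Q)
      (f : M →ₗ[R] I) (g : I →ₗ[R] Q), Module.Injective R I ∧ Function.Injective f ∧
      Function.Surjective g ∧ Function.Exact f g ∧ IdLE R n Q := by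
  unfold IdLE at *
  obtain ⟨p⟩ := EnoughInjectives.presentation (ModuleCat.of R M)
  let f : M →ₗ[R] p.J := p.f.hom
  have hf : Function.Injective f := (ModuleCat.mono_iff_injective p.f).1 p.mono
  have hex : Function.Exact f (LinearMap.range f).mkQ := LinearMap.exact_map_mkQ_range f
  refine ⟨p.J, inferInstance, inferInstance, p.J ⧸ LinearMap.range f, inferInstance, inferInstance,
    f, (LinearMap.range f).mkQ, ?_, hf, Submodule.mkQ_surjective _, hex, ?_⟩
  · exact (Module.injective_iff_injective_object R p.J).2 p.injective
  have hs : (ShortComplex.mk (ModuleCat.ofHom f) (ModuleCat.ofHom (LinearMap.range f).mkQ)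
      (by ext x; exact hex.apply_apply_eq_zero x)).ShortExact :=
    ModuleCat.shortComplex_shortExact _ hex hf (Submodule.mkQ_surjective _)
  refine hs.hasInjectiveDimensionLT_X₃ (n + 1) ?_ h
  have := p.injective
  have h1 : HasInjectiveDimensionLT p.J 1 := inferInstance
  exact hasInjectiveDimensionLT_of_ge p.J 1 _ (by omega)

/-- coinduced module -/
def CoInd {A E : Type} [Ring A] [Ring E] (j : A →+* E) (X : Type) [AddCommGroup X] [Module A X] :
    AddSubgroup (E →+ X) where
  carrier := {φ | ∀ a x, φ (j a * x) = a • φ x}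
  zero_mem' := by intro a x; simp
  add_mem' := by intro f g hf hg a x; simp [hf a x, hg a x]
  neg_mem' := by intro f hf a x; simp [hf a x]

section CoInd
variable {A E : Type} [Ring A] [Ring E] (j : A →+* E) (X : Type) [AddCommGroup X] [Module A X]

instance : Module E (CoInd j X) where
  smul e φ := ⟨φ.1.comp (AddMonoidHom.mulRight e), fun a x => by
    simp only [AddMonoidHom.comp_apply, AddMonoidHom.coe_mulRight, mul_assoc]; exact φ.2 _ _⟩
  one_smul φ := by
    apply Subtype.ext; ext x; exact congrArg φ.1 (mul_one x)
  mul_smul e e' φ := by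
    apply Subtype.ext; ext x; exact congrArg φ.1 (mul_assoc x e e').symm
  smul_zero e := rfl
  smul_add e φ ψ := rfl
  add_smul e e' φ := by
    apply Subtype.ext; ext x; exact (congrArg φ.1 (mul_add x e e')).trans (map_add _ _ _)
  zero_smul φ := by
    apply Subtype.ext; ext x; exact (congrArg φ.1 (mul_zero x)).trans (map_zero _)

variable {X} {j}
theorem CoInd.smul_apply (e : E) (φ : CoInd j X) (x : E) : (e • φ).1 x = φ.1 (x * e) := rfl
theorem CoInd.add_apply (φ ψ : CoInd j X) (x : E) : (φ + ψ).1 x = φ.1 x + ψ.1 x := rfl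

variable (j)
/-- functoriality -/
def CoInd.map {Y : Type} [AddCommGroup Y] [Module A Y] (g : X →ₗ[A] Y) :
    CoInd j X →ₗ[E] CoInd j Y where
  toFun φ := ⟨g.toAddMonoidHom.comp φ.1, fun a x => by
    change g (φ.1 (j a * x)) = a • g (φ.1 x)
    rw [φ.2 a x, map_smul]⟩
  map_add' φ ψ := by apply Subtype.ext; ext x; exact map_add g _ _
  map_smul' e φ := rfl

theorem CoInd.injective (hX : Module.Injective A X) : Module.Injective E (CoInd j X) where
  out X' Y' _ _ _ _ f hf g := by
    letI : Module A X' := Module.compHom X' j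
    letI : Module A Y' := Module.compHom Y' j
    let f' : X' →ₗ[A] Y' := { toFun := f, map_add' := map_add f, map_smul' := fun a x => map_smul f (j a) x }
    let g' : X' →ₗ[A] X :=
      { toFun := fun x => (g x).1 1
        map_add' := fun x y => by rw [map_add]; rfl
        map_smul' := fun a x => by
          change (g (j a • x)).1 1 = a • (g x).1 1
          rw [map_smul, CoInd.smul_apply, one_mul, ← (g x).2 a 1, mul_one] }
    obtain ⟨l, hl⟩ := hX.out f' hf g'
    refine ⟨{ toFun := fun y => ⟨{ toFun := fun e => l (e • y), map_zero' := by simp,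
                                   map_add' := fun e e' => by rw [add_smul, map_add] }, ?_⟩
              map_add' := ?_, map_smul' := ?_ }, ?_⟩
    · intro a e
      change l ((j a * e) • y) = a • l (e • y)
      rw [mul_smul]
      exact map_smul l a (e • y)
    · intro y y'
      apply Subtype.ext; ext e
      change l (e • (y + y')) = l (e • y) + l (e • y')
      rw [smul_add, map_add]
    · intro e' y
      apply Subtype.ext; ext e
      change l (e • e' • y) = l ((e * e') • y)
      rw [mul_smul]
    · intro x
      apply Subtype.ext; ext e
      change l (e • f x) = (g x).1 e
      rw [← map_smul f]
      refine (hl (e • x)).trans ?_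
      change (g (e • x)).1 1 = _
      rw [map_smul, CoInd.smul_apply, one_mul]

theorem CoInd.map_surjective {Y : Type} [AddCommGroup Y] [Module A Y] (g : X →ₗ[A] Y)
    (hE : letI := Module.compHom E j; Module.Projective A E)
    (hg : Function.Surjective g) : Function.Surjective (CoInd.map j g) := by
  letI := Module.compHom E j
  intro φ
  let φ' : E →ₗ[A] Y := { toFun := φ.1, map_add' := map_add φ.1, map_smul' := fun a x => φ.2 a x }
  obtain ⟨ψ, hψ⟩ := Module.projective_lifting_property g φ' hg
  refine ⟨⟨ψ.toAddMonoidHom, fun a x => map_smul ψ a x⟩, ?_⟩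
  apply Subtype.ext; ext x
  exact LinearMap.congr_fun hψ x

theorem CoInd.idLE (hE : letI := Module.compHom E j; Module.Projective A E) :
    ∀ (n : ℕ) (X : Type) [AddCommGroup X] [Module A X], IdLE A n X → IdLE E n (CoInd j X)
  | 0, X, _, _, h => IdLE.zero_iff.2 (CoInd.injective j (IdLE.zero_iff.1 h))
  | n + 1, X, _, _, h => by
    obtain ⟨I, _, _, Q, _, _, f, g, hI, hf, hg, hex, hQ⟩ := h.exists_cosyzygy
    refine IdLE.of_exact (CoInd.map j f) (CoInd.map j g) ?_ (CoInd.map_surjective j g hE hg) ?_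
      ((IdLE.zero_iff.2 (CoInd.injective j hI)).mono (by omega)) (CoInd.idLE hE n Q hQ)
    · intro φ ψ h
      apply Subtype.ext; ext x
      exact hf (DFunLike.congr_fun (congrArg Subtype.val h) x)
    · intro φ
      constructor
      · intro h
        have h1 : ∀ x, ∃ y, f y = φ.1 x := fun x =>
          (hex (φ.1 x)).1 (DFunLike.congr_fun (congrArg Subtype.val h) x)
        choose y hy using h1
        refine ⟨⟨{ toFun := y, map_zero' := ?_, map_add' := ?_ }, ?_⟩, ?_⟩
        · apply hf; simp [hy]
        · intro a b; apply hf; simp [hy]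
        · intro a b; apply hf
          change f (y _) = f (a • y b)
          rw [map_smul, hy, hy, φ.2]
        · apply Subtype.ext; ext x; exact hy x
      · rintro ⟨ψ, rfl⟩
        apply Subtype.ext; ext x
        exact hex.apply_apply_eq_zero (ψ.1 x)
end CoInd

section Dg
variable (k H : Type) [Field k] [Ring H] [HopfAlgebra k H]

/-- `V ⊗ H` with the diagonal action. -/
def Dg (V : Type) [AddCommGroup V] [Module k V] : Type := V ⊗[k] H

variable (V : Type) [AddCommGroup V] [Module k V]
instance : AddCommGroup (Dg k H V) := inferInstanceAs (AddCommGroup (V ⊗[k] H))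
instance : Module k (Dg k H V) := inferInstanceAs (Module k (V ⊗[k] H))

variable [Module H V] [IsScalarTower k H V]

/-- the diagonal action as algebra map. -/
def dgHom : H →ₐ[k] Module.End k (V ⊗[k] H) :=
  (Module.endTensorEndAlgHom (R := k) (S := k) (A := k) (M := V) (N := H)).comp
    ((Algebra.TensorProduct.map (Algebra.lsmul k k V) (Algebra.lsmul k k H)).comp
      (Bialgebra.comulAlgHom k H))

instance : Module H (Dg k H V) := Module.compHom (V ⊗[k] H) (dgHom k H V).toRingHom

theorem dg_smul_def (h : H) (y : Dg k H V) : h • y = dgHom k H V h y := rfl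

instance : IsScalarTower k H (Dg k H V) := ⟨fun c h y => by
  rw [dg_smul_def, dg_smul_def, map_smul]; rfl⟩

variable {k H V}
theorem dgHom_tmul (h : H) (v : V) (x : H) {ι : Type} (r : Coalgebra.Repr k h ι) :
    dgHom k H V h (v ⊗ₜ[k] x) =
      ∑ i ∈ r.index, (r.left i • v) ⊗ₜ[k] (r.right i * x) := by
  simp only [dgHom, AlgHom.comp_apply, Bialgebra.comulAlgHom_apply, ← r.eq, map_sum,
    LinearMap.sum_apply, Algebra.TensorProduct.map_tmul, Module.endTensorEndAlgHom_apply]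
  simp

/-- A `k`-linear map commuting with the diagonal actions gives an `H`-linear map. -/
def dgLin {M : Type} [AddCommGroup M] [Module k M] [Module H M] (g : V ⊗[k] H →ₗ[k] M)
    (hg : ∀ h v x, g (dgHom k H V h (v ⊗ₜ x)) = h • g (v ⊗ₜ x)) : Dg k H V →ₗ[H] M :=
  { toFun := g
    map_add' := map_add g
    map_smul' := by
      intro h y
      change g (dgHom k H V h y) = h • g y
      change V ⊗[k] H at y
      induction y with
      | zero => simp
      | add x y hx hy => simp only [map_add, smul_add, hx, hy]
      | tmul v x => exact hg h v x }

variable (k H) in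
/-- functoriality of `Dg`. -/
def Dg.map {V W : Type} [AddCommGroup V] [Module k V] [Module H V] [IsScalarTower k H V]
    [AddCommGroup W] [Module k W] [Module H W] [IsScalarTower k H W] (g : V →ₗ[H] W) :
    Dg k H V →ₗ[H] Dg k H W :=
  dgLin (M := Dg k H W) ((g.restrictScalars k).rTensor H : V ⊗[k] H →ₗ[k] W ⊗[k] H) (by
    intro h v x
    rw [dg_smul_def]
    rw [dgHom_tmul h v x (Coalgebra.Repr.arbitrary k h)]
    refine (map_sum ((g.restrictScalars k).rTensor H) _ _).trans ?_
    refine Eq.trans ?_ (dgHom_tmul h (g v) x (Coalgebra.Repr.arbitrary k h)).symm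
    simp)

theorem Dg.map_tmul {V W : Type} [AddCommGroup V] [Module k V] [Module H V] [IsScalarTower k H V]
    [AddCommGroup W] [Module k W] [Module H W] [IsScalarTower k H W] (g : V →ₗ[H] W)
    (y : V ⊗[k] H) : Dg.map k H g y = (g.restrictScalars k).rTensor H y := rfl

variable (k H) in
/-- The action map `H ⊗ Y → Y`. -/
def actMap (Y : Type) [AddCommGroup Y] [Module k Y] [Module H Y] [IsScalarTower k H Y] :
    H ⊗[k] Y →ₗ[H] Y :=
  { TensorProduct.lift (Algebra.lsmul k k Y).toLinearMap with
    map_smul' := by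
      intro h y
      change TensorProduct.lift (Algebra.lsmul k k Y).toLinearMap (h • y) =
        h • TensorProduct.lift (Algebra.lsmul k k Y).toLinearMap y
      induction y with
      | zero => simp
      | add x y hx hy => simp only [map_add, smul_add, hx, hy]
      | tmul v x => simp [TensorProduct.smul_tmul'] }

theorem actMap_tmul (Y : Type) [AddCommGroup Y] [Module k Y] [Module H Y] [IsScalarTower k H Y]
    (h : H) (y : Y) : actMap k H Y (h ⊗ₜ y) = h • y := by
  change TensorProduct.lift (Algebra.lsmul k k Y).toLinearMap (h ⊗ₜ y) = _
  simp

theorem proj_of_section {Y : Type} [AddCommGroup Y] [Module k Y] [Module H Y] [IsScalarTower k H Y]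
    (s : Y →ₗ[H] H ⊗[k] Y) (hs : ∀ y, actMap k H Y (s y) = y) : Module.Projective H Y :=
  Module.Projective.of_split s (actMap k H Y) (LinearMap.ext hs)

variable (k H) in
/-- auxiliary map `h ⊗ y ↦ h₁ ⊗ S(h₂) y`. -/
def kap (V : Type) [AddCommGroup V] [Module k V] :
    H →ₗ[k] (V ⊗[k] H →ₗ[k] H ⊗[k] (V ⊗[k] H)) :=
  (TensorProduct.lift ((LinearMap.llcomp k (V ⊗[k] H) (V ⊗[k] H) (H ⊗[k] (V ⊗[k] H))).compl₁₂
    (TensorProduct.mk k H (V ⊗[k] H))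
    ((LinearMap.lTensorHom V).comp ((LinearMap.mul k H).comp (HopfAlgebra.antipode k))))).comp
  Coalgebra.comul

theorem kap_tmul (V : Type) [AddCommGroup V] [Module k V] (h : H) (v : V) (x : H) {ι : Type}
    (r : Coalgebra.Repr k h ι) : kap k H V h (v ⊗ₜ x) =
      ∑ i ∈ r.index, r.left i ⊗ₜ[k] (v ⊗ₜ[k] (HopfAlgebra.antipode k (r.right i) * x)) := by
  simp [kap, ← r.eq, map_sum, LinearMap.sum_apply]

theorem kap_mul (V : Type) [AddCommGroup V] [Module k V] (g h : H) (v : V) (x : H) {ι κ : Type}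
    (r : Coalgebra.Repr k g ι) (r' : Coalgebra.Repr k h κ) : kap k H V (g * h) (v ⊗ₜ x) =
      ∑ i ∈ r.index, ∑ j ∈ r'.index, (r.left i * r'.left j) ⊗ₜ[k]
        (v ⊗ₜ[k] (HopfAlgebra.antipode k (r.right i * r'.right j) * x)) := by
  simp only [kap, LinearMap.comp_apply, Bialgebra.comul_mul, ← r.eq, ← r'.eq, Finset.sum_mul_sum,
    map_sum, LinearMap.sum_apply, Algebra.TensorProduct.tmul_mul_tmul]
  simp

open Coalgebra HopfAlgebra in
theorem coassocR (h : H) : (∑ i ∈ (ℛ k h).index, ∑ j ∈ (ℛ k ((ℛ k h).left i)).index,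
    (ℛ k ((ℛ k h).left i)).left j ⊗ₜ[k] ((ℛ k ((ℛ k h).left i)).right j ⊗ₜ[k] (ℛ k h).right i))
    = ∑ i ∈ (ℛ k h).index, ∑ j ∈ (ℛ k ((ℛ k h).right i)).index,
      (ℛ k h).left i ⊗ₜ[k] ((ℛ k ((ℛ k h).right i)).left j ⊗ₜ[k] (ℛ k ((ℛ k h).right i)).right j) :=
  sum_tmul_tmul_eq (ℛ k h) (fun i => ℛ k ((ℛ k h).left i)) (fun i => ℛ k ((ℛ k h).right i))

open Coalgebra in
theorem sum_counit_smul' {C : Type} [AddCommGroup C] [Module k C] [Coalgebra k C] {a : C} {ι : Type}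
    (r : Repr k a ι) :
    ∑ x ∈ r.index, counit (R := k) (r.right x) • r.left x = a := by
  simpa only [map_sum, TensorProduct.lift.tmul, LinearMap.lsmul_apply, one_smul,
    LinearMap.flip_apply]
    using congr(TensorProduct.lift (LinearMap.lsmul k C).flip $(sum_tmul_counit_eq (R := k) r))

open Coalgebra HopfAlgebra in
/-- `h₁ v ⊗ h₂ S(h₃) x = h v ⊗ x` -/
theorem dg_antipode (h : H) (v : V) (x : H) :
    ∑ i ∈ (ℛ k h).index, dgHom k H V ((ℛ k h).left i)
      (v ⊗ₜ[k] (antipode k ((ℛ k h).right i) * x)) = (h • v) ⊗ₜ[k] x := by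
  simp_rw [fun i y => dgHom_tmul (V := V) ((ℛ k h).left i) v y (ℛ k _)]
  have := congrArg (TensorProduct.map ((LinearMap.toSpanSingleton H V v).restrictScalars k)
    ((LinearMap.mulRight k x).comp ((LinearMap.mul' k H).comp ((antipode k).lTensor H))))
    (coassocR (k := k) h)
  simp only [map_sum, TensorProduct.map_tmul, LinearMap.coe_comp, Function.comp_apply,
    LinearMap.lTensor_tmul, LinearMap.mul'_apply, LinearMap.mulRight_apply,
    LinearMap.coe_restrictScalars, LinearMap.toSpanSingleton_apply] at this
  simp_rw [← mul_assoc]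
  rw [this]
  simp_rw [← TensorProduct.tmul_sum, ← Finset.sum_mul, sum_mul_antipode_eq_smul, smul_mul_assoc,
    one_mul, ← TensorProduct.smul_tmul, ← smul_assoc, ← TensorProduct.sum_tmul, ← Finset.sum_smul,
    sum_counit_smul']

open Coalgebra HopfAlgebra in
theorem kap_lin (V : Type) [AddCommGroup V] [Module k V] (g h : H) (p : V) (x : H) :
    ∑ i ∈ (ℛ k g).index, kap k H V ((ℛ k g).left i * h) (p ⊗ₜ ((ℛ k g).right i * x)) =
      g • kap k H V h (p ⊗ₜ x) := by
  simp_rw [fun i => kap_mul V ((ℛ k g).left i) h p ((ℛ k g).right i * x)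
        (ℛ k ((ℛ k g).left i)) (ℛ k h), kap_tmul V h p x (ℛ k h)]
  simp only [antipode_mul_antidistrib]
  have key : ∀ m, _ := fun m => congrArg (TensorProduct.map (LinearMap.mulRight k ((ℛ k h).left m))
    ((TensorProduct.mk k V H p).comp ((LinearMap.mulLeft k (antipode k ((ℛ k h).right m))).comp
      ((LinearMap.mulRight k x).comp ((LinearMap.mul' k H).comp ((antipode k).rTensor H))))))
    (coassocR (k := k) g)
  simp only [map_sum, TensorProduct.map_tmul, LinearMap.coe_comp, Function.comp_apply,
    LinearMap.rTensor_tmul, LinearMap.mul'_apply, LinearMap.mulRight_apply,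
    LinearMap.mulLeft_apply, TensorProduct.mk_apply] at key
  simp_rw [mul_assoc] at key ⊢
  rw [Finset.smul_sum]
  simp_rw [Finset.sum_comm (s := (ℛ k ((ℛ k g).left _)).index)]
  rw [Finset.sum_comm]
  refine Finset.sum_congr rfl fun m _ => ?_
  rw [key m]
  simp_rw [← mul_assoc, mul_assoc (antipode k ((ℛ k h).right m)),
    ← TensorProduct.tmul_sum, ← Finset.mul_sum, ← Finset.sum_mul,
    sum_antipode_mul_eq_smul]
  simp only [mul_smul_comm, smul_mul_assoc, one_mul, TensorProduct.tmul_smul]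
  simp_rw [TensorProduct.smul_tmul', ← smul_mul_assoc, ← TensorProduct.sum_tmul,
    ← Finset.sum_mul, sum_counit_smul', smul_eq_mul]

open Coalgebra HopfAlgebra in
theorem sigma_lin (s : V →ₗ[H] H ⊗[k] V) (g : H) (v : V) (x : H) :
    ((TensorProduct.lift (kap k H V)).comp
      ((TensorProduct.assoc k H V H).toLinearMap.comp ((s.restrictScalars k).rTensor H)))
      (dgHom k H V g (v ⊗ₜ x)) = g • ((TensorProduct.lift (kap k H V)).comp
      ((TensorProduct.assoc k H V H).toLinearMap.comp ((s.restrictScalars k).rTensor H)))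
      (v ⊗ₜ x) := by
  rw [dgHom_tmul g v x (ℛ k g), map_sum]
  simp only [LinearMap.coe_comp, Function.comp_apply, LinearMap.rTensor_tmul,
    LinearMap.coe_restrictScalars, map_smul, LinearEquiv.coe_coe]
  generalize s v = t
  induction t with
  | zero => simp
  | add t u ht hu =>
    simp only [smul_add, TensorProduct.add_tmul, map_add, Finset.sum_add_distrib, ht, hu]
  | tmul h p =>
    simp only [TensorProduct.smul_tmul', smul_eq_mul, TensorProduct.assoc_tmul,
      TensorProduct.lift.tmul]
    exact kap_lin V g h p x

open Coalgebra HopfAlgebra in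
theorem sigma_sec (t : H ⊗[k] V) (x : H) :
    actMap k H (Dg k H V) (TensorProduct.lift (kap k H V) (TensorProduct.assoc k H V H (t ⊗ₜ x)))
      = (actMap k H V t) ⊗ₜ[k] x := by
  induction t with
  | zero => simp only [TensorProduct.zero_tmul, map_zero]; exact map_zero _
  | add t u ht hu =>
    simp only [TensorProduct.add_tmul, map_add]
    exact (map_add _ _ _).trans (congrArg₂ (· + ·) ht hu)
  | tmul h p =>
    simp only [TensorProduct.assoc_tmul, TensorProduct.lift.tmul, actMap_tmul]
    rw [kap_tmul V h p x (ℛ k h), ← dg_antipode]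
    refine (map_sum (actMap k H (Dg k H V)) _ _).trans ?_
    refine Finset.sum_congr rfl fun i _ => ?_
    exact actMap_tmul _ _ _

theorem dg_projective (hV : Module.Projective H V) : Module.Projective H (Dg k H V) := by
  obtain ⟨s, hs⟩ := Module.projective_lifting_property (actMap k H V) LinearMap.id
    (fun v => ⟨1 ⊗ₜ v, by rw [actMap_tmul, one_smul]⟩)
  have hs' : ∀ v, actMap k H V (s v) = v := fun v => LinearMap.congr_fun hs v
  refine proj_of_section (dgLin (M := H ⊗[k] Dg k H V) _ (sigma_lin s)) ?_
  intro y
  change V ⊗[k] H at y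
  induction y with
  | zero => exact (congrArg _ (map_zero _)).trans (map_zero _)
  | add x y hx hy =>
    refine Eq.trans ?_ (congrArg₂ (· + ·) hx hy)
    exact (congrArg _ (map_add _ _ _)).trans (map_add _ _ _)
  | tmul v x => exact (sigma_sec (s v) x).trans (by rw [hs'])
end Dg

section LH
variable {k H E : Type} [Field k] [Ring H] [HopfAlgebra k H] [Ring E] [Algebra k E]

/-- `Hom_k(H, N)`. -/
def LH (_ρ : E →ₐ[k] E ⊗[k] H) (N : Type) [AddCommGroup N] [Module k N] : Type := H →ₗ[k] N

variable (ρ : E →ₐ[k] E ⊗[k] H)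
section a
variable (N : Type) [AddCommGroup N] [Module k N]
instance : AddCommGroup (LH ρ N) := inferInstanceAs (AddCommGroup (H →ₗ[k] N))
instance : Module k (LH ρ N) := inferInstanceAs (Module k (H →ₗ[k] N))
instance : FunLike (LH ρ N) H N := inferInstanceAs (FunLike (H →ₗ[k] N) H N)
instance : LinearMapClass (LH ρ N) k H N := inferInstanceAs (LinearMapClass (H →ₗ[k] N) k H N)

variable {ρ N} in
theorem LH.ext {ψ φ : LH ρ N} (h : ∀ x, ψ x = φ x) : ψ = φ := LinearMap.ext (f := ψ) (g := φ) h
variable {ρ N} in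
theorem LH.add_apply (ψ φ : LH ρ N) (x : H) : (ψ + φ) x = ψ x + φ x := rfl
theorem LH.zero_apply (x : H) : (0 : LH ρ N) x = 0 := rfl

/-- make an element. -/
def LH.mk {N : Type} [AddCommGroup N] [Module k N] (f : H →ₗ[k] N) : LH ρ N := f

variable {ρ N} in
theorem LH.mk_apply (f : H →ₗ[k] N) (x : H) : (LH.mk ρ f) x = f x := rfl

instance : Module H (LH ρ N) where
  smul h ψ := LH.mk ρ (LinearMap.comp (ψ : H →ₗ[k] N) (LinearMap.mulLeft k (HopfAlgebra.antipode k h)))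
  one_smul ψ := LH.ext fun x => by
    change ψ (HopfAlgebra.antipode k 1 * x) = ψ x
    rw [HopfAlgebra.antipode_one, one_mul]
  mul_smul h h' ψ := LH.ext fun x => by
    change ψ (HopfAlgebra.antipode k (h * h') * x) = ψ (HopfAlgebra.antipode k h' *
      (HopfAlgebra.antipode k h * x))
    rw [HopfAlgebra.antipode_mul_antidistrib, mul_assoc]
  smul_zero h := rfl
  smul_add h φ ψ := rfl
  add_smul h h' ψ := LH.ext fun x => by
    change ψ (HopfAlgebra.antipode k (h + h') * x) = ψ (HopfAlgebra.antipode k h * x)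
      + ψ (HopfAlgebra.antipode k h' * x)
    rw [map_add, add_mul, map_add]
  zero_smul ψ := LH.ext fun x => by
    change ψ (HopfAlgebra.antipode k 0 * x) = 0
    rw [map_zero, zero_mul, map_zero]

variable {ρ N} in
theorem LH.h_smul_apply (h : H) (ψ : LH ρ N) (x : H) :
    (h • ψ) x = ψ (HopfAlgebra.antipode k h * x) := rfl

instance : IsScalarTower k H (LH ρ N) := ⟨fun c h ψ => LH.ext fun x => by
  change ψ (HopfAlgebra.antipode k (c • h) * x) = c • ψ (HopfAlgebra.antipode k h * x)
  rw [map_smul, smul_mul_assoc, map_smul]⟩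
end a

variable (N : Type) [AddCommGroup N] [Module k N] [Module E N] [IsScalarTower k E N]

variable (k H) in
/-- precomposition with right multiplication -/
def rmHom (N : Type) [AddCommGroup N] [Module k N] : H →ₐ[k] Module.End k (H →ₗ[k] N) :=
  AlgHom.ofLinearMap
    (((LinearMap.llcomp k H H N).flip).comp (LinearMap.mul k H).flip)
    (by ext ψ x; simp) (by intro h h'; ext ψ x; simp [mul_assoc])

theorem rmHom_apply (N : Type) [AddCommGroup N] [Module k N] (h : H) (ψ : H →ₗ[k] N) (x : H) :
    rmHom k H N h ψ x = ψ (x * h) := by simp [rmHom]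

variable (k H E) in
/-- `E ⊗ H` acts. -/
def ehHom : E ⊗[k] H →ₐ[k] Module.End k (H →ₗ[k] N) :=
  Algebra.TensorProduct.lift (Algebra.lsmul k k (H →ₗ[k] N)) (rmHom k H N) (by
    intro e h
    apply LinearMap.ext; intro ψ; apply LinearMap.ext; intro x
    simp [rmHom_apply])

theorem ehHom_tmul (e : E) (h : H) (ψ : H →ₗ[k] N) (x : H) :
    ehHom k H E N (e ⊗ₜ h) ψ x = e • ψ (x * h) := by
  have := Algebra.TensorProduct.lift_tmul (Algebra.lsmul k k (H →ₗ[k] N)) (rmHom k H N) (by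
    intro e h
    apply LinearMap.ext; intro ψ; apply LinearMap.ext; intro x
    simp [rmHom_apply]) e h
  refine (LinearMap.congr_fun (LinearMap.congr_fun this ψ) x).trans ?_
  simp [rmHom_apply]

theorem ehHom_sum (ψ : H →ₗ[k] N) (x : H) {ι : Type} (s : Finset ι) (u : ι → E)
    (v : ι → H) : ehHom k H E N (∑ i ∈ s, u i ⊗ₜ v i) ψ x = ∑ i ∈ s, u i • ψ (x * v i) := by
  simp only [map_sum, LinearMap.sum_apply, ehHom_tmul]

instance : Module E (LH ρ N) :=
  Module.compHom (H →ₗ[k] N) ((ehHom k H E N).comp ρ).toRingHom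

variable {N ρ}
theorem LH.e_smul_def (e : E) (ψ : LH ρ N) : e • ψ = ehHom k H E N (ρ e) ψ := rfl

theorem LH.e_smul_apply (e : E) (ψ : LH ρ N) (x : H) {ι : Type} (s : Finset ι) (u : ι → E)
    (v : ι → H) (h : ρ e = ∑ i ∈ s, u i ⊗ₜ v i) : (e • ψ) x = ∑ i ∈ s, u i • ψ (x * v i) := by
  rw [LH.e_smul_def, h]
  exact ehHom_sum N ψ x s u v

theorem exists_rep (t : E ⊗[k] H) : ∃ (n : ℕ) (u : Fin n → E) (v : Fin n → H),
    t = ∑ i, u i ⊗ₜ v i := by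
  obtain ⟨n, u, v, h⟩ := TensorProduct.exists_sum_tmul_eq t
  exact ⟨n, _, _, h⟩

instance : SMulCommClass H E (LH ρ N) := ⟨fun h e ψ => LH.ext fun x => by
  obtain ⟨n, u, v, huv⟩ := exists_rep (ρ e)
  rw [LH.h_smul_apply, LH.e_smul_apply e _ _ _ u v huv, LH.e_smul_apply e _ _ _ u v huv]
  simp only [LH.h_smul_apply, mul_assoc]⟩

instance : SMulCommClass E H (LH ρ N) := SMulCommClass.symm _ _ _

theorem base_idLE {d : ℕ} (hb : ∀ (N : Type) [AddCommGroup N] [Module k N] [Module E N]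
    [IsScalarTower k E N], IdLE E d (LH ρ N)) (V : Type) [AddCommGroup V] [Module H V]
    (hV : Module.Projective H V) : IdLE E d (V →ₗ[H] LH ρ N) := by
  obtain ⟨s, hs⟩ := hV.out
  let ev : V → LH ρ (V → N) →ₗ[E] LH ρ N := fun w =>
    { toFun := fun Ψ => LH.mk ρ ((LinearMap.proj w : (V → N) →ₗ[k] N).comp (Ψ : H →ₗ[k] (V → N)))
      map_add' := fun _ _ => rfl
      map_smul' := fun e Ψ => LH.ext fun x => by
        obtain ⟨n, u, v, huv⟩ := exists_rep (ρ e)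
        rw [RingHom.id_apply, LH.e_smul_apply e _ _ _ u v huv]
        change (e • Ψ) x w = _
        rw [LH.e_smul_apply e _ _ _ u v huv, Finset.sum_apply]
        rfl }
  refine (hb (V → N)).retract
    { toFun := fun φ => LH.mk ρ (LinearMap.pi fun v => (φ v : H →ₗ[k] N))
      map_add' := fun _ _ => rfl
      map_smul' := ?_ }
    { toFun := fun Ψ => (Finsupp.linearCombination H (fun w => ev w Ψ)).comp s
      map_add' := ?_
      map_smul' := ?_ } ?_
  · intro e φ
    apply LH.ext; intro x; funext w
    obtain ⟨n, u, v, huv⟩ := exists_rep (ρ e)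
    rw [RingHom.id_apply, LH.e_smul_apply e _ _ _ u v huv, Finset.sum_apply]
    change (e • φ w) x = _
    rw [LH.e_smul_apply e _ _ _ u v huv]
    rfl
  · intro Ψ Ψ'
    ext v : 1
    simp only [LinearMap.comp_apply, LinearMap.add_apply, map_add, Finsupp.linearCombination_apply,
      smul_add, Finsupp.sum_add]
  · intro e Ψ
    ext v : 1
    simp only [LinearMap.comp_apply, LinearMap.smul_apply, map_smul, RingHom.id_apply,
      Finsupp.linearCombination_apply, Finsupp.smul_sum]
    exact Finset.sum_congr rfl fun w _ => smul_comm _ _ _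
  · intro φ
    ext v : 1
    change Finsupp.linearCombination H (fun w => φ w) (s v) = φ v
    conv_rhs => rw [← hs v]
    rw [Finsupp.linearCombination_apply, Finsupp.linearCombination_apply, Finsupp.sum, Finsupp.sum,
      map_sum]
    simp
end LH

section TN
variable {k H E : Type} [Field k] [Ring H] [HopfAlgebra k H] [Ring E] [Algebra k E]

theorem dg_split {K P V : Type} [AddCommGroup K] [Module k K] [Module H K] [IsScalarTower k H K]
    [AddCommGroup P] [Module k P] [Module H P] [IsScalarTower k H P]
    [AddCommGroup V] [Module k V] [Module H V] [IsScalarTower k H V]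
    (i : K →ₗ[H] P) (p : P →ₗ[H] V) (hi : Function.Injective i) (hp : Function.Surjective p)
    (hip : Function.Exact i p) (hV : Module.Projective H (Dg k H V)) :
    ∃ r : Dg k H P →ₗ[H] Dg k H K, ∀ y, r (Dg.map k H i y) = y := by
  have hi' : Function.Injective (Dg.map k H i) :=
    Module.Flat.rTensor_preserves_injective_linearMap (M := H) (i.restrictScalars k) hi
  have hp' : Function.Surjective (Dg.map k H p) :=
    LinearMap.rTensor_surjective H (g := p.restrictScalars k) hp
  have hex : Function.Exact (Dg.map k H i) (Dg.map k H p) :=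
    rTensor_exact H (f := i.restrictScalars k) (g := p.restrictScalars k) hip hp
  obtain ⟨s, hs⟩ := Module.projective_lifting_property (Dg.map k H p) LinearMap.id hp'
  have h1 := hex.split_tfae'.out 0 1
  have h2 : Function.Surjective (Dg.map k H p) ∧ ∃ l, l ∘ₗ Dg.map k H i = LinearMap.id :=
    h1.1 ⟨hi', s, hs⟩
  obtain ⟨-, l, hl⟩ := h2
  exact ⟨l, LinearMap.congr_fun hl⟩

variable {ρ : E →ₐ[k] E ⊗[k] H} {N : Type} [AddCommGroup N] [Module k N]

/-- the associated functional on `K ⊗ H` -/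
def phiT {K : Type} [AddCommGroup K] [Module k K] [Module H K] [IsScalarTower k H K]
    (φ : K →ₗ[H] LH ρ N) : K ⊗[k] H →ₗ[k] N :=
  TensorProduct.lift (φ.restrictScalars k : K →ₗ[k] LH ρ N)

open Coalgebra HopfAlgebra in
theorem phiT_inv {K : Type} [AddCommGroup K] [Module k K] [Module H K] [IsScalarTower k H K]
    (φ : K →ₗ[H] LH ρ N) (h : H) (y : K ⊗[k] H) :
    phiT φ (dgHom k H K h y) = counit (R := k) h • phiT φ y := by
  have e : ∀ v x, phiT φ (v ⊗ₜ x) = φ v x := fun v x => rfl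
  induction y with
  | zero => simp
  | add x y hx hy => simp only [map_add, smul_add, hx, hy]
  | tmul v x =>
    rw [dgHom_tmul h v x (ℛ k h), map_sum]
    simp_rw [e, map_smul, LH.h_smul_apply, ← mul_assoc]
    rw [← map_sum (φ v), ← Finset.sum_mul, sum_antipode_mul_eq_smul, smul_mul_assoc, one_mul,
      map_smul]

open Coalgebra HopfAlgebra in
theorem lh_extend {K P : Type} [AddCommGroup K] [Module k K] [Module H K] [IsScalarTower k H K]
    [AddCommGroup P] [Module k P] [Module H P] [IsScalarTower k H P]
    (i : K →ₗ[H] P) (r : Dg k H P →ₗ[H] Dg k H K) (hr : ∀ y, r (Dg.map k H i y) = y)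
    (φ : K →ₗ[H] LH ρ N) : ∃ φ' : P →ₗ[H] LH ρ N, φ'.comp i = φ := by
  let r' : P ⊗[k] H →ₗ[k] K ⊗[k] H := (r.restrictScalars k : Dg k H P →ₗ[k] Dg k H K)
  let Φ : P ⊗[k] H →ₗ[k] N := (phiT φ).comp r'
  have hinv : ∀ h y, Φ (dgHom k H P h y) = counit (R := k) h • Φ y := by
    intro h y
    have : r' (dgHom k H P h y) = dgHom k H K h (r' y) := LinearMap.map_smul r h y
    simp only [Φ, LinearMap.comp_apply, this, phiT_inv]
  refine ⟨{ toFun := fun v => LH.mk ρ (Φ.comp (TensorProduct.mk k P H v))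
            map_add' := ?_, map_smul' := ?_ }, ?_⟩
  · intro v w
    apply LH.ext; intro x
    change Φ ((v + w) ⊗ₜ x) = Φ (v ⊗ₜ x) + Φ (w ⊗ₜ x)
    rw [TensorProduct.add_tmul, map_add]
  · intro h v
    apply LH.ext; intro x
    rw [RingHom.id_apply, LH.h_smul_apply]
    change Φ ((h • v) ⊗ₜ x) = Φ (v ⊗ₜ (antipode k h * x))
    rw [← dg_antipode, map_sum]
    simp_rw [hinv]
    simp_rw [← map_smul, ← TensorProduct.tmul_smul, ← smul_mul_assoc]
    rw [← map_sum, ← TensorProduct.tmul_sum, ← Finset.sum_mul]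
    simp_rw [← map_smul]
    rw [← map_sum, sum_counit_smul]
  · ext v : 1
    apply LH.ext; intro x
    change phiT φ (r' (i v ⊗ₜ x)) = φ v x
    have : r' (i v ⊗ₜ x) = v ⊗ₜ x := hr (v ⊗ₜ x)
    rw [this]
    rfl

theorem T_idLE [Module E N] [IsScalarTower k E N] {d : ℕ}
    (hb : ∀ (N : Type) [AddCommGroup N] [Module k N] [Module E N]
    [IsScalarTower k E N], IdLE E d (LH ρ N)) : ∀ (n : ℕ) (V : Type) [AddCommGroup V] [Module k V]
    [Module H V] [IsScalarTower k H V], Module.Projective H (Dg k H V) → PdLE H n V →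
      IdLE E (d + n) (V →ₗ[H] LH ρ N)
  | 0, V, _, _, _, _, _, h => base_idLE hb V h
  | n + 1, V, _, _, _, _, hV, h => by
    obtain ⟨P, _, _, p, hP, hp, hK⟩ := h
    let _ : Module k P := Module.compHom P (algebraMap k H)
    have : IsScalarTower k H P := ⟨fun c h v => by
      change (c • h) • v = (algebraMap k H c) • (h • v)
      rw [Algebra.smul_def, mul_smul]⟩
    have hex : Function.Exact (LinearMap.ker p).subtype p := LinearMap.exact_subtype_ker_map p
    obtain ⟨r, hr⟩ := dg_split (k := k) (LinearMap.ker p).subtype p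
      (Submodule.injective_subtype _) hp hex hV
    have hKC : Module.Projective H (Dg k H (LinearMap.ker p)) := by
      have := dg_projective (k := k) hP
      exact Module.Projective.of_split (Dg.map k H (LinearMap.ker p).subtype) r
        (LinearMap.ext hr)
    have ih := T_idLE hb n (LinearMap.ker p) hKC hK
    refine IdLE.of_exact (n := d + n) (Y := P →ₗ[H] LH ρ N)
      { toFun := fun φ => φ.comp p, map_add' := fun _ _ => rfl, map_smul' := fun _ _ => rfl }
      { toFun := fun φ => φ.comp (LinearMap.ker p).subtype, map_add' := fun _ _ => rfl,
        map_smul' := fun _ _ => rfl } ?_ ?_ ?_ ((base_idLE hb P hP).mono (by omega)) ih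
    · intro φ ψ h
      exact (LinearMap.cancel_right hp).1 h
    · intro φ
      exact lh_extend _ r hr φ
    · intro φ
      constructor
      · intro h
        have h' : ∀ v : LinearMap.ker p, φ v = 0 := fun v => LinearMap.congr_fun h v
        let e := p.quotKerEquivOfSurjective hp
        have hle : LinearMap.ker p ≤ LinearMap.ker φ := fun v hv => h' ⟨v, hv⟩
        refine ⟨((LinearMap.ker p).liftQ φ hle).comp e.symm.toLinearMap, ?_⟩
        ext v : 1
        change (LinearMap.ker p).liftQ φ hle (e.symm (p v)) = φ v
        have : p v = e (Submodule.Quotient.mk v) := rfl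
        rw [this, e.symm_apply_apply]
        rfl
      · rintro ⟨ψ, rfl⟩
        ext v : 1
        change ψ (p v) = 0
        rw [v.2, map_zero]

/-- trivial module -/
def Triv (k H : Type) [Field k] [Ring H] [HopfAlgebra k H] : Type := k

instance : AddCommGroup (Triv k H) := inferInstanceAs (AddCommGroup k)
instance : Module k (Triv k H) := inferInstanceAs (Module k k)
instance : Module H (Triv k H) := Module.compHom k (Bialgebra.counitAlgHom k H).toRingHom

/-- generator -/
def Triv.one (k H : Type) [Field k] [Ring H] [HopfAlgebra k H] : Triv k H := (1 : k)

/-- underlying scalar -/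
def Triv.val (c : Triv k H) : k := c

open Coalgebra in
theorem Triv.smul_def (h : H) (c : Triv k H) : h • c = counit (R := k) h • c := rfl

instance : IsScalarTower k H (Triv k H) := ⟨fun c h x => by
  rw [Triv.smul_def, Triv.smul_def, map_smul, smul_assoc]⟩

open Coalgebra in
theorem triv_dg : Module.Projective H (Dg k H (Triv k H)) := by
  let e : Triv k H ⊗[k] H ≃ₗ[k] H := TensorProduct.lid k H
  have he : ∀ (c : Triv k H) (x : H), e (c ⊗ₜ x) = c.val • x :=
    fun c x => TensorProduct.lid_tmul x c.val
  let g : Dg k H (Triv k H) →ₗ[H] H := dgLin e.toLinearMap (by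
    intro h v x
    rw [dgHom_tmul h v x (ℛ k h), map_sum]
    have : ∀ i, e ((((ℛ k h).left i • v : Triv k H)) ⊗ₜ[k] ((ℛ k h).right i * x)) =
      (counit (R := k) ((ℛ k h).left i) • (ℛ k h).right i) * e (v ⊗ₜ x) := by
      intro i
      rw [Triv.smul_def, ← TensorProduct.smul_tmul', map_smul, smul_mul_assoc]
      congr 1
      rw [he, he, mul_smul_comm]
    refine (Finset.sum_congr rfl fun i _ => this i).trans ?_
    rw [← Finset.sum_mul, sum_counit_smul]
    rfl)
  exact Module.Projective.of_equiv (LinearEquiv.ofBijective g e.bijective).symm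

open Coalgebra HopfAlgebra in
theorem triv_inv (φ : Triv k H →ₗ[H] LH ρ N) (x : H) :
    φ (Triv.one k H) x = counit (R := k) x • φ (Triv.one k H) 1 := by
  set ψ := φ (Triv.one k H) with hψ
  have h1 : ∀ h x, ψ (antipode k h * x) = counit (R := k) h • ψ x := by
    intro h x
    rw [← LH.h_smul_apply, hψ, ← map_smul, Triv.smul_def]
    rw [show φ (counit (R := k) h • Triv.one k H) = counit (R := k) h • φ (Triv.one k H) from
      map_smul (φ.restrictScalars k) _ _]
    rfl
  have h2 : ∑ i ∈ (ℛ k x).index, ψ (antipode k ((ℛ k x).left i) * (ℛ k x).right i) =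
      ψ x := by
    simp_rw [h1, ← map_smul]
    rw [← map_sum, sum_counit_smul]
  rw [← h2, ← map_sum, sum_antipode_mul_eq_smul, map_smul]

open Coalgebra HopfAlgebra in
theorem triv_idLE [Module E N] [IsScalarTower k E N] {n : ℕ}
    (hρ : ∀ e, TensorProduct.rid k E ((counit (R := k) (A := H)).lTensor E (ρ e)) = e)
    (h : IdLE E n (Triv k H →ₗ[H] LH ρ N)) : IdLE E n N := by
  have key : ∀ (e : E) (m : ℕ) (u : Fin m → E) (v : Fin m → H), ρ e = ∑ i, u i ⊗ₜ v i →
      ∑ i, counit (R := k) (v i) • u i = e := by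
    intro e m u v huv
    have := hρ e
    rw [huv] at this
    simpa using this
  let i0 : N → Triv k H →ₗ[k] H →ₗ[k] N := fun n =>
    LinearMap.smulRight (LinearMap.id : k →ₗ[k] k) (LinearMap.smulRight (counit (R := k)) n)
  have hi0 : ∀ n (c : Triv k H) x, i0 n c x = c.val • counit (R := k) x • n := fun n c x => rfl
  refine h.retract
    { toFun := fun n => { toFun := fun c => LH.mk ρ (i0 n c)
                          map_add' := fun c d => congrArg (LH.mk ρ) (map_add (i0 n) c d)
                          map_smul' := ?_ }
      map_add' := ?_
      map_smul' := ?_ }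
    { toFun := fun φ => φ (Triv.one k H) 1
      map_add' := fun _ _ => rfl
      map_smul' := ?_ } ?_
  · intro h c
    apply LH.ext; intro x
    rw [RingHom.id_apply, LH.h_smul_apply, LH.mk_apply, LH.mk_apply, hi0, hi0]
    rw [Bialgebra.counit_mul, counit_antipode]
    have : (h • c).val = counit (R := k) h * c.val := rfl
    rw [this]
    rw [smul_smul, smul_smul]
    congr 1
    ring
  · intro n m
    ext c : 1
    apply LH.ext; intro x
    change i0 (n + m) c x = i0 n c x + i0 m c x
    simp only [hi0, smul_add]
  · intro e n
    ext c : 1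
    apply LH.ext; intro x
    obtain ⟨m, u, v, huv⟩ := exists_rep (ρ e)
    change i0 (e • n) c x = (e • LH.mk ρ (i0 n c)) x
    rw [LH.e_smul_apply e _ _ _ u v huv]
    simp_rw [LH.mk_apply, hi0, Bialgebra.counit_mul]
    conv_lhs => rw [← key e m u v huv]
    rw [Finset.sum_smul, Finset.smul_sum, Finset.smul_sum]
    refine Finset.sum_congr rfl fun i _ => ?_
    rw [smul_assoc, mul_smul, smul_comm (u i), smul_comm (u i), smul_comm (u i)]
  · intro e φ
    obtain ⟨m, u, v, huv⟩ := exists_rep (ρ e)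
    change (e • φ (Triv.one k H)) 1 = e • φ (Triv.one k H) 1
    rw [LH.e_smul_apply e _ _ _ u v huv]
    conv_rhs => rw [← key e m u v huv]
    rw [Finset.sum_smul]
    refine Finset.sum_congr rfl fun i _ => ?_
    rw [one_mul, triv_inv, smul_assoc, smul_comm]
  · intro n
    change i0 n (Triv.one k H) 1 = n
    rw [hi0]
    change (1 : k) • _ = _
    rw [Bialgebra.counit_one, one_smul, one_smul]

theorem glDim_of_coaction (ρ : E →ₐ[k] E ⊗[k] H) {d dH : ℕ}
    (hρ : ∀ e, TensorProduct.rid k E ((Coalgebra.counit (R := k) (A := H)).lTensor E (ρ e)) = e)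
    (hb : ∀ (N : Type) [AddCommGroup N] [Module k N] [Module E N]
      [IsScalarTower k E N], IdLE E d (LH ρ N)) (hH : GlDimLE H dH) : GlDimLE E (d + dH) := by
  apply glDimLE_of_idLE
  intro N _ _
  let _ : Module k N := Module.compHom N (algebraMap k E)
  have : IsScalarTower k E N := ⟨fun c h v => by
      change (c • h) • v = (algebraMap k E c) • (h • v)
      rw [Algebra.smul_def, mul_smul]⟩
  exact triv_idLE hρ (T_idLE hb dH (Triv k H) triv_dg (hH _))
end TN

section CP
open Coalgebra
variable {k A H E : Type} [Field k] [Ring A] [Algebra k A] [Ring H] [HopfAlgebra k H]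
    [Ring E] [Algebra k E]

theorem itComul_one {ι : Type} {h : H} (r : Repr k h ι) :
    itComul k 1 h = ∑ i ∈ r.index, tp k ![r.left i, r.right i] := by
  change (TensorProduct.map LinearMap.id (TensorProduct.rid k H).symm.toLinearMap) (comul (R := k) h)
    = ∑ i ∈ r.index, r.left i ⊗ₜ[k] (r.right i ⊗ₜ[k] (1 : k))
  rw [← r.eq, map_sum]
  simp

theorem itComul_two {ι : Type} {κ : ι → Type} {h : H} (r : Repr k h ι)
    (q : ∀ i, Repr k (r.right i) (κ i)) :
    itComul k 2 h = ∑ x ∈ r.index.sigma (fun i => (q i).index),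
      tp k ![r.left x.1, (q x.1).left x.2, (q x.1).right x.2] := by
  rw [Finset.sum_sigma]
  change (TensorProduct.map LinearMap.id (itComul k 1)) (comul (R := k) h)
    = ∑ i ∈ r.index, ∑ j ∈ (q i).index, r.left i ⊗ₜ[k] (tp k ![(q i).left j, (q i).right j])
  rw [← r.eq, map_sum]
  refine Finset.sum_congr rfl fun i _ => ?_
  rw [TensorProduct.map_tmul, itComul_one (q i), TensorProduct.tmul_sum]
  rfl

theorem srep_of {n : ℕ} {κ : Type} (s : Finset κ) (u : κ → Fin (n + 1) → H) {h : H}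
    (hh : itComul k n h = ∑ i ∈ s, tp k (u i)) :
    SRep k n h s.card (fun i => u (s.equivFin.symm i)) := by
  unfold SRep
  rw [hh, ← Finset.sum_coe_sort s, ← s.equivFin.symm.sum_comp]

theorem sum_fin {κ M : Type} [AddCommMonoid M] (s : Finset κ) (F : κ → M) :
    ∑ i : Fin s.card, F (s.equivFin.symm i) = ∑ i ∈ s, F i := by
  rw [← Finset.sum_coe_sort s, ← s.equivFin.symm.sum_comp]

theorem CrossedProduct.mul_formula (S : CrossedProduct k A H E) (a b : A) {h l : H}
    {ι κ : Type} (r : Repr k h ι) (q : ∀ i, Repr k (r.right i) κ)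
    {ι' : Type} (t : Repr k l ι') :
    S.ι (a ⊗ₜ h) * S.ι (b ⊗ₜ l) = ∑ i ∈ r.index, ∑ j ∈ (q i).index, ∑ m ∈ t.index,
      S.ι ((a * S.act (r.left i) b * S.f ((q i).left j) (t.left m)) ⊗ₜ
        ((q i).right j * t.right m)) := by
  rw [S.ι_mul a b h l _ _ _ _ (srep_of _ _ (itComul_two r q)) (srep_of _ _ (itComul_one t))]
  rw [Finset.sum_sigma' r.index (fun i => (q i).index) (fun i j => ∑ m ∈ t.index,
      S.ι ((a * S.act (r.left i) b * S.f ((q i).left j) (t.left m)) ⊗ₜ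
        ((q i).right j * t.right m)))]
  rw [← sum_fin (r.index.sigma (fun i => (q i).index))]
  refine Finset.sum_congr rfl fun x _ => ?_
  rw [← sum_fin t.index]
  rfl

theorem conv_formula {f g : H →ₗ[k] H →ₗ[k] A} (hfg : IsConvInverse f g) {h l : H}
    {ι κ : Type} (r : Repr k h ι) (t : Repr k l κ) :
    (∑ i ∈ r.index, ∑ j ∈ t.index, f (r.left i) (t.left j) * g (r.right i) (t.right j)) =
        (counit (R := k) h * counit (R := k) l) • (1 : A) ∧
    (∑ i ∈ r.index, ∑ j ∈ t.index, g (r.left i) (t.left j) * f (r.right i) (t.right j)) =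
        (counit (R := k) h * counit (R := k) l) • (1 : A) := by
  obtain ⟨h1, h2⟩ := hfg h l _ _ _ _ (srep_of _ _ (itComul_one r)) (srep_of _ _ (itComul_one t))
  constructor
  · rw [← h1, ← sum_fin r.index]
    refine Finset.sum_congr rfl fun x _ => ?_
    rw [← sum_fin t.index]
    rfl
  · rw [← h2, ← sum_fin r.index]
    refine Finset.sum_congr rfl fun x _ => ?_
    rw [← sum_fin t.index]
    rfl

/-- the representation of `Δ 1`. -/
def repOne : Repr k (1 : H) Unit where
  index := {()}
  left _ := 1
  right _ := 1
  eq := by simp [Algebra.TensorProduct.one_def]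

variable (S : CrossedProduct k A H E)

theorem CrossedProduct.f_one_right (h : H) : S.f h 1 = counit (R := k) h • (1 : A) := (S.f_normal h).1
theorem CrossedProduct.f_one_left (h : H) : S.f 1 h = counit (R := k) h • (1 : A) := (S.f_normal h).2

theorem CrossedProduct.aE_mul (a b : A) (h : H) :
    S.aE a * S.ι (b ⊗ₜ h) = S.ι ((a * b) ⊗ₜ h) := by
  change S.ι (a ⊗ₜ 1) * S.ι (b ⊗ₜ h) = _
  rw [S.mul_formula a b (repOne (k := k) (H := H)) (fun _ => repOne) (ℛ k h)]
  simp only [repOne, Finset.sum_singleton, S.one_act, S.f_one_left, mul_smul_comm, mul_one, one_mul]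
  simp_rw [TensorProduct.smul_tmul]
  rw [← map_sum, ← TensorProduct.tmul_sum, sum_counit_smul]

theorem CrossedProduct.mul_hE (a : A) (g h : H) :
    S.ι (a ⊗ₜ g) * S.hE h = S.ι (TensorProduct.map
      ((LinearMap.mulLeft k a).comp (TensorProduct.lift S.f)) (LinearMap.mul' k H)
        (comul (R := k) (g ⊗ₜ[k] h))) := by
  change S.ι (a ⊗ₜ g) * S.ι (1 ⊗ₜ h) = _
  rw [S.mul_formula a 1 (ℛ k g) (fun i => ℛ k _) (ℛ k h)]
  let Θ : H →ₗ[k] E := S.ι.toLinearMap.comp ((TensorProduct.map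
      ((LinearMap.mulLeft k a).comp (TensorProduct.lift S.f)) (LinearMap.mul' k H)).comp
        (comul.comp ((TensorProduct.mk k H H).flip h)))
  have hΘ : ∀ y, Θ y = ∑ j ∈ (ℛ k y).index, ∑ m ∈ (ℛ k h).index,
      S.ι ((a * S.f ((ℛ k y).left j) ((ℛ k h).left m)) ⊗ₜ
        ((ℛ k y).right j * (ℛ k h).right m)) := by
    intro y
    simp only [Θ, LinearMap.comp_apply, LinearMap.flip_apply, TensorProduct.mk_apply]
    rw [← ((ℛ k y).tmul (ℛ k h)).eq]
    simp only [map_sum, Coalgebra.Repr.tmul, Finset.sum_product, TensorProduct.map_tmul]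
    simp
  change _ = Θ g
  conv_rhs => rw [← sum_counit_smul (ℛ k g), map_sum]
  refine Finset.sum_congr rfl fun i _ => ?_
  rw [map_smul, hΘ, Finset.smul_sum]
  refine Finset.sum_congr rfl fun j _ => ?_
  rw [Finset.smul_sum]
  refine Finset.sum_congr rfl fun m _ => ?_
  rw [S.act_one, mul_smul_comm, mul_one, smul_mul_assoc, ← TensorProduct.smul_tmul', map_smul]

theorem CrossedProduct.mul_aE (a b : A) (g : H) :
    S.ι (a ⊗ₜ g) * S.aE b = S.ι (TensorProduct.map
      ((LinearMap.mulLeft k a).comp (S.act.flip b)) LinearMap.id (comul (R := k) g)) := by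
  change S.ι (a ⊗ₜ g) * S.ι (b ⊗ₜ 1) = _
  rw [S.mul_formula a b (ℛ k g) (fun i => ℛ k _) repOne]
  conv_rhs => rw [← (ℛ k g).eq]
  simp only [map_sum]
  refine Finset.sum_congr rfl fun i _ => ?_
  simp only [repOne, Finset.sum_singleton, S.f_one_right, mul_smul_comm, mul_one]
  simp_rw [TensorProduct.smul_tmul]
  rw [← map_sum, ← TensorProduct.tmul_sum, sum_counit_smul]
  simp

/-- `A → E` as a ring homomorphism -/
def CrossedProduct.jE : A →+* E where
  toFun := S.aE
  map_one' := S.ι_one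
  map_zero' := map_zero _
  map_add' := map_add _
  map_mul' a b := (S.aE_mul a b 1).symm

theorem CrossedProduct.aE_mul_hE (a : A) (h : H) : S.aE a * S.hE h = S.ι (a ⊗ₜ h) := by
  change S.aE a * S.ι (1 ⊗ₜ h) = _
  rw [S.aE_mul, mul_one]

theorem CrossedProduct.jE_smul (c : k) : S.jE (c • 1) = c • 1 := by
  change S.aE (c • 1) = _
  rw [map_smul]
  exact congrArg _ S.ι_one

theorem CrossedProduct.ind {p : E → Prop} (h0 : p 0) (h1 : ∀ a h, p (S.ι (a ⊗ₜ h)))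
    (h2 : ∀ x y, p x → p y → p (x + y)) (x : E) : p x := by
  obtain ⟨t, rfl⟩ := S.ι.surjective x
  induction t with
  | zero => rw [map_zero]; exact h0
  | add t u ht hu => rw [map_add]; exact h2 _ _ ht hu
  | tmul a h => exact h1 a h

theorem CrossedProduct.proj : letI := Module.compHom E S.jE; Module.Projective A E := by
  letI := Module.compHom E S.jE
  let e : A ⊗[k] H ≃ₗ[A] E := { S.ι with
    map_smul' := by
      intro a t
      change S.ι (a • t) = S.aE a * S.ι t
      induction t with
      | zero => simp
      | add t u ht hu => simp only [smul_add, map_add, mul_add, ht, hu]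
      | tmul b h => rw [S.aE_mul, TensorProduct.smul_tmul', smul_eq_mul] }
  exact Module.Projective.of_equiv e
end CP

section Rho
open Coalgebra
variable {k A H E : Type} [Field k] [Ring A] [Algebra k A] [Ring H] [HopfAlgebra k H]
    [Ring E] [Algebra k E] (S : CrossedProduct k A H E)

/-- the coaction -/
def CrossedProduct.rhoL : E →ₗ[k] E ⊗[k] H :=
  (S.ι.toLinearMap.rTensor H).comp ((TensorProduct.assoc k A H H).symm.toLinearMap.comp
    ((comul.lTensor A).comp S.ι.symm.toLinearMap))

theorem CrossedProduct.rhoL_ι (a : A) {h : H} {ι : Type} (r : Repr k h ι) :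
    S.rhoL (S.ι (a ⊗ₜ h)) = ∑ i ∈ r.index, S.ι (a ⊗ₜ r.left i) ⊗ₜ[k] r.right i := by
  simp [CrossedProduct.rhoL, ← r.eq, map_sum, TensorProduct.tmul_sum]

theorem CrossedProduct.rhoL_R {C : Type} [AddCommGroup C] [Module k C] [Coalgebra k C]
    (u : C →ₗ[k] A) (m : C →ₗ[k] H)
    (hm : ∀ c, comul (R := k) (m c) = TensorProduct.map m m (comul (R := k) c)) (c : C) :
    S.rhoL (S.ι (TensorProduct.map u m (comul (R := k) c))) =
      TensorProduct.map (S.ι.toLinearMap.comp ((TensorProduct.map u m).comp comul)) m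
        (comul (R := k) c) := by
  let Θ : C ⊗[k] (C ⊗[k] C) →ₗ[k] E ⊗[k] H := (S.ι.toLinearMap.rTensor H).comp
    ((TensorProduct.assoc k A H H).symm.toLinearMap.comp
      (TensorProduct.map u (TensorProduct.map m m)))
  have h1 : ∀ t : C ⊗[k] C, S.rhoL (S.ι (TensorProduct.map u m t)) = Θ (comul.lTensor C t) := by
    intro t
    induction t with
    | zero => simp
    | add t u ht hu => simp only [map_add, ht, hu]
    | tmul x y => simp [CrossedProduct.rhoL, Θ, hm]
  have h2 : ∀ t : C ⊗[k] C, TensorProduct.map (S.ι.toLinearMap.comp ((TensorProduct.map u m).comp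
      comul)) m t = Θ (TensorProduct.assoc k C C C (comul.rTensor C t)) := by
    intro t
    induction t with
    | zero => simp
    | add t u ht hu => simp only [map_add, ht, hu]
    | tmul x y =>
      simp only [TensorProduct.map_tmul, LinearMap.rTensor_tmul, LinearMap.comp_apply]
      generalize comul (R := k) x = t
      induction t with
      | zero => simp
      | add t u ht hu => simp only [map_add, TensorProduct.add_tmul, ht, hu]
      | tmul x z => simp [Θ]
  rw [h1, h2, coassoc_apply]

theorem mul'_comul (c : H ⊗[k] H) : comul (R := k) (LinearMap.mul' k H c) =
    TensorProduct.map (LinearMap.mul' k H) (LinearMap.mul' k H) (comul (R := k) c) := by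
  have := LinearMap.congr_fun (Bialgebra.mulCoalgHom k H).map_comp_comul c
  exact this.symm

theorem CrossedProduct.rhoL_aE (a : A) : S.rhoL (S.aE a) = S.aE a ⊗ₜ 1 := by
  refine (S.rhoL_ι a (repOne (k := k) (H := H))).trans ?_
  simp [repOne]
  rfl

theorem CrossedProduct.rhoL_hE {h : H} {ι : Type} (r : Repr k h ι) :
    S.rhoL (S.hE h) = ∑ i ∈ r.index, S.hE (r.left i) ⊗ₜ[k] r.right i :=
  S.rhoL_ι 1 r

theorem CrossedProduct.rhoL_mul_hE (x : E) (h : H) :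
    S.rhoL (x * S.hE h) = S.rhoL x * S.rhoL (S.hE h) := by
  induction x using S.ind with
  | h0 => simp
  | h2 x y hx hy => simp only [add_mul, map_add, hx, hy]
  | h1 a g =>
    rw [S.mul_hE, S.rhoL_R _ _ mul'_comul, S.rhoL_ι a (ℛ k g), S.rhoL_hE (ℛ k h),
      Finset.sum_mul_sum, ← ((ℛ k g).tmul (ℛ k h)).eq]
    simp only [map_sum, Coalgebra.Repr.tmul, Finset.sum_product, TensorProduct.map_tmul,
      LinearMap.comp_apply]
    refine Finset.sum_congr rfl fun i _ => Finset.sum_congr rfl fun j _ => ?_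
    rw [Algebra.TensorProduct.tmul_mul_tmul, S.mul_hE, LinearMap.mul'_apply]
    rfl

theorem CrossedProduct.rhoL_mul_aE (x : E) (b : A) :
    S.rhoL (x * S.aE b) = S.rhoL x * S.rhoL (S.aE b) := by
  induction x using S.ind with
  | h0 => simp
  | h2 x y hx hy => simp only [add_mul, map_add, hx, hy]
  | h1 a g =>
    rw [S.mul_aE, S.rhoL_R _ LinearMap.id (by simp), S.rhoL_ι a (ℛ k g), S.rhoL_aE,
      Finset.sum_mul]
    conv_lhs => rw [← (ℛ k g).eq]
    simp only [map_sum, TensorProduct.map_tmul, LinearMap.comp_apply]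
    refine Finset.sum_congr rfl fun i _ => ?_
    rw [Algebra.TensorProduct.tmul_mul_tmul, S.mul_aE, mul_one]
    rfl

/-- the coaction as algebra map -/
def CrossedProduct.rho : E →ₐ[k] E ⊗[k] H := AlgHom.ofLinearMap S.rhoL
  (by
    have : (1 : E) = S.aE 1 := S.ι_one.symm
    rw [this, S.rhoL_aE, ← this]; rfl)
  (by
    intro x y
    induction y using S.ind with
    | h0 => simp
    | h2 y z hy hz => simp only [mul_add, map_add, hy, hz]
    | h1 a g =>
      rw [← S.aE_mul_hE, ← mul_assoc, S.rhoL_mul_hE, S.rhoL_mul_aE, S.rhoL_mul_hE, mul_assoc])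

theorem CrossedProduct.rho_apply (x : E) : S.rho x = S.rhoL x := rfl

theorem CrossedProduct.rho_counit (e : E) :
    TensorProduct.rid k E ((counit (R := k) (A := H)).lTensor E (S.rho e)) = e := by
  rw [S.rho_apply]
  induction e using S.ind with
  | h0 => simp
  | h2 x y hx hy => simp only [map_add, hx, hy]
  | h1 a g =>
    rw [S.rhoL_ι a (ℛ k g)]
    simp only [map_sum, LinearMap.lTensor_tmul, TensorProduct.rid_tmul]
    simp_rw [← map_smul, ← TensorProduct.tmul_smul]
    rw [← map_sum, ← TensorProduct.tmul_sum, sum_counit_smul']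

/-- `b ⊗ c ↦ b F(c₁) ⊗ c₂` -/
def tw {B C : Type} [Ring B] [Algebra k B] [AddCommGroup C] [Module k C] [Coalgebra k C]
    (F : C →ₗ[k] B) : B ⊗[k] C →ₗ[k] B ⊗[k] C :=
  ((LinearMap.mul' k B).rTensor C).comp ((TensorProduct.assoc k B B C).symm.toLinearMap.comp
    (((F.rTensor C).comp comul).lTensor B))

theorem tw_tmul {B C : Type} [Ring B] [Algebra k B] [AddCommGroup C] [Module k C] [Coalgebra k C]
    (F : C →ₗ[k] B) (b : B) {c : C} {ι : Type} (r : Repr k c ι) :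
    tw F (b ⊗ₜ c) = ∑ i ∈ r.index, (b * F (r.left i)) ⊗ₜ[k] r.right i := by
  simp [tw, ← r.eq, map_sum, TensorProduct.tmul_sum]

theorem tw_tw {B C : Type} [Ring B] [Algebra k B] [AddCommGroup C] [Module k C] [Coalgebra k C]
    (F G : C →ₗ[k] B) (hFG : ∀ c, ∑ i ∈ (ℛ k c).index, F ((ℛ k c).left i) * G ((ℛ k c).right i) =
      counit (R := k) c • 1) (t : B ⊗[k] C) :
    tw G (tw F t) = t := by
  induction t with
  | zero => simp
  | add x y hx hy => simp only [map_add, hx, hy]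
  | tmul b c =>
    rw [tw_tmul F b (ℛ k c), map_sum]
    simp_rw [fun i => tw_tmul G (b * F ((ℛ k c).left i)) (ℛ k ((ℛ k c).right i))]
    have := congrArg ((((LinearMap.mulLeft k b).comp ((LinearMap.mul' k B).comp
      (TensorProduct.map F G))).rTensor C).comp (TensorProduct.assoc k C C C).symm.toLinearMap)
      (sum_tmul_tmul_eq (ℛ k c) (fun i => ℛ k ((ℛ k c).left i)) (fun i => ℛ k ((ℛ k c).right i)))
    simp only [map_sum, LinearMap.comp_apply, LinearEquiv.coe_coe, TensorProduct.assoc_symm_tmul,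
      LinearMap.rTensor_tmul, TensorProduct.map_tmul, LinearMap.mul'_apply,
      LinearMap.mulLeft_apply] at this
    simp_rw [mul_assoc]
    rw [← this]
    simp_rw [← TensorProduct.sum_tmul, ← Finset.mul_sum, hFG, mul_smul_comm, mul_one,
      TensorProduct.smul_tmul]
    rw [← TensorProduct.tmul_sum, sum_counit_smul]

theorem tw_bij {B C : Type} [Ring B] [Algebra k B] [AddCommGroup C] [Module k C] [Coalgebra k C]
    (F G : C →ₗ[k] B) (hFG : ∀ c, ∑ i ∈ (ℛ k c).index, F ((ℛ k c).left i) * G ((ℛ k c).right i) =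
      counit (R := k) c • 1)
    (hGF : ∀ c, ∑ i ∈ (ℛ k c).index, G ((ℛ k c).left i) * F ((ℛ k c).right i) =
      counit (R := k) c • 1) : Function.Bijective (tw F) :=
  Function.bijective_iff_has_inverse.2 ⟨tw G, tw_tw F G hFG, tw_tw G F hGF⟩
end Rho

section Fin
open Coalgebra
variable {k A H E : Type} [Field k] [Ring A] [Algebra k A] [Ring H] [HopfAlgebra k H]
    [Ring E] [Algebra k E] (S : CrossedProduct k A H E)

theorem conv_lift {f g : H →ₗ[k] H →ₗ[k] A}
    (hfg : ∀ h l : H, (∑ i ∈ (ℛ k h).index, ∑ j ∈ (ℛ k l).index, f ((ℛ k h).left i) ((ℛ k l).left j)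
      * g ((ℛ k h).right i) ((ℛ k l).right j)) =
        (counit (R := k) h * counit (R := k) l) • (1 : A)) (c : H ⊗[k] H) :
    ∑ i ∈ (ℛ k c).index, TensorProduct.lift f ((ℛ k c).left i) *
      TensorProduct.lift g ((ℛ k c).right i) = counit (R := k) c • 1 := by
  have h1 : ∑ i ∈ (ℛ k c).index, TensorProduct.lift f ((ℛ k c).left i) *
      TensorProduct.lift g ((ℛ k c).right i) = LinearMap.mul' k A (TensorProduct.map
        (TensorProduct.lift f) (TensorProduct.lift g) (comul (R := k) c)) := by
    conv_rhs => rw [← (ℛ k c).eq]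
    simp
  rw [h1]
  clear h1
  induction c with
  | zero => simp
  | add x y hx hy => simp only [map_add, hx, hy, add_smul]
  | tmul h l =>
    rw [← ((ℛ k h).tmul (ℛ k l)).eq]
    simp only [map_sum, Coalgebra.Repr.tmul, Finset.sum_product, TensorProduct.map_tmul,
      LinearMap.mul'_apply, TensorProduct.lift.tmul]
    rw [hfg h l]
    simp [mul_comm]

/-- the identification `A ⊗ (H ⊗ H) ≃ E ⊗ H` -/
def CrossedProduct.Q : A ⊗[k] (H ⊗[k] H) ≃ₗ[k] E ⊗[k] H :=
  (TensorProduct.assoc k A H H).symm.trans (S.ι.rTensor H)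

theorem CrossedProduct.Q_tmul (a : A) (g h : H) : S.Q (a ⊗ₜ (g ⊗ₜ h)) = S.ι (a ⊗ₜ g) ⊗ₜ h := by
  simp [CrossedProduct.Q]

theorem CrossedProduct.tw_fac (t : A ⊗[k] (H ⊗[k] H)) :
    tw S.hE (S.Q t) = S.Q ((tw (LinearMap.id : H →ₗ[k] H)).lTensor A
      (tw (TensorProduct.lift S.f) t)) := by
  induction t with
  | zero => simp
  | add x y hx hy => simp only [map_add, hx, hy]
  | tmul a c =>
    induction c with
    | zero => simp
    | add x y hx hy => simp only [TensorProduct.tmul_add, map_add, hx, hy]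
    | tmul g h =>
      rw [S.Q_tmul, tw_tmul S.hE _ (ℛ k h), tw_tmul _ a ((ℛ k g).tmul (ℛ k h))]
      simp_rw [S.mul_hE]
      have e : ∀ m, comul (R := k) (g ⊗ₜ[k] (ℛ k h).left m) = _ := fun m =>
        ((ℛ k g).tmul (ℛ k ((ℛ k h).left m))).eq.symm
      simp_rw [e]
      simp only [map_sum, Coalgebra.Repr.tmul, Finset.sum_product, TensorProduct.map_tmul,
        LinearMap.mul'_apply, TensorProduct.lift.tmul, LinearMap.lTensor_tmul,
        LinearMap.comp_apply, LinearMap.mulLeft_apply, TensorProduct.sum_tmul]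
      rw [Finset.sum_comm]
      refine Finset.sum_congr rfl fun i _ => ?_
      have := congrArg ((S.ι.toLinearMap.rTensor H).comp
        ((TensorProduct.assoc k A H H).symm.toLinearMap.comp
        (TensorProduct.map ((LinearMap.mulLeft k a).comp (S.f ((ℛ k g).left i)))
          ((LinearMap.mulLeft k ((ℛ k g).right i)).rTensor H)))) (coassocR (k := k) h)
      simp only [map_sum, LinearMap.comp_apply, LinearEquiv.coe_coe, TensorProduct.assoc_symm_tmul,
        LinearMap.rTensor_tmul, TensorProduct.map_tmul, LinearMap.mulLeft_apply] at this
      refine this.trans ?_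
      refine Finset.sum_congr rfl fun m _ => ?_
      rw [tw_tmul _ _ (ℛ k ((ℛ k h).right m)), TensorProduct.tmul_sum, map_sum]
      refine Finset.sum_congr rfl fun j _ => ?_
      rw [S.Q_tmul]
      rfl

theorem CrossedProduct.tw_bijective (finv : H →ₗ[k] H →ₗ[k] A) (hfinv : IsConvInverse S.f finv) :
    Function.Bijective (tw S.hE) := by
  have b1 : Function.Bijective (tw (TensorProduct.lift S.f)) :=
    tw_bij _ (TensorProduct.lift finv)
      (conv_lift fun h l => (conv_formula hfinv (ℛ k h) (ℛ k l)).1)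
      (conv_lift fun h l => (conv_formula hfinv (ℛ k h) (ℛ k l)).2)
  have b2 : Function.Bijective (tw (LinearMap.id : H →ₗ[k] H)) :=
    tw_bij _ (HopfAlgebra.antipode k)
      (fun c => HopfAlgebra.sum_mul_antipode_eq_smul _)
      (fun c => HopfAlgebra.sum_antipode_mul_eq_smul _)
  have b3 : Function.Bijective ((tw (LinearMap.id : H →ₗ[k] H)).lTensor A) :=
    ((LinearEquiv.ofBijective _ b2).lTensor A).bijective
  have h : (tw S.hE : E ⊗[k] H → E ⊗[k] H) ∘ S.Q = S.Q ∘
      ((tw (LinearMap.id : H →ₗ[k] H)).lTensor A) ∘ (tw (TensorProduct.lift S.f)) :=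
    funext S.tw_fac
  have b4 : Function.Bijective ((tw S.hE : E ⊗[k] H → E ⊗[k] H) ∘ S.Q) := by
    rw [h]
    exact S.Q.bijective.comp (b3.comp b1)
  exact (Function.Bijective.of_comp_iff _ S.Q.bijective).1 b4

theorem tw_left {B C : Type} [Ring B] [Algebra k B] [AddCommGroup C] [Module k C] [Coalgebra k C]
    (F : C →ₗ[k] B) (b : B) (t : B ⊗[k] C) : tw F ((LinearMap.mulLeft k b).rTensor C t) =
      (LinearMap.mulLeft k b).rTensor C (tw F t) := by
  induction t with
  | zero => simp
  | add x y hx hy => simp only [map_add, hx, hy]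
  | tmul a c =>
    rw [LinearMap.rTensor_tmul, tw_tmul F _ (ℛ k c), tw_tmul F _ (ℛ k c)]
    simp [mul_assoc]

section iso
variable {N : Type} [AddCommGroup N] [Module k N] [Module E N] [IsScalarTower k E N]

theorem CrossedProduct.jE_smul_LH (a : A) (φ : LH S.rho N) (x : H) :
    (S.jE a • φ) x = S.jE a • φ x := by
  rw [LH.e_smul_apply (S.jE a) φ x {()} (fun _ => S.jE a) (fun _ => 1)]
  · simp
  · rw [Finset.sum_singleton]; exact S.rhoL_aE a

theorem CrossedProduct.hE_smul_LH (h : H) (φ : LH S.rho N) (x : H) :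
    (S.hE h • φ) x = ∑ i ∈ (ℛ k h).index, S.hE ((ℛ k h).left i) • φ (x * (ℛ k h).right i) :=
  LH.e_smul_apply _ _ _ _ _ _ (S.rhoL_hE (ℛ k h))

/-- `x ⊗ h ↦ x • φ h` -/
def hatE (φ : H →ₗ[k] N) : E ⊗[k] H →ₗ[k] N :=
  TensorProduct.lift ((LinearMap.lcomp k N φ).comp (Algebra.lsmul k k N).toLinearMap)

theorem hatE_tmul (φ : H →ₗ[k] N) (x : E) (h : H) : hatE φ (x ⊗ₜ[k] h) = x • φ h := by
  simp [hatE]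

theorem hatE_left (φ : H →ₗ[k] N) (b : E) (t : E ⊗[k] H) :
    hatE φ ((LinearMap.mulLeft k b).rTensor H t) = b • hatE φ t := by
  induction t with
  | zero => simp
  | add x y hx hy => simp only [map_add, hx, hy, smul_add]
  | tmul a c => rw [LinearMap.rTensor_tmul, hatE_tmul, hatE_tmul, LinearMap.mulLeft_apply, mul_smul]

theorem CrossedProduct.hatE_tw (φ : LH S.rho N) (x : E) (h : H) :
    hatE (φ : H →ₗ[k] N) (tw S.hE (x ⊗ₜ h)) = x • (S.hE h • φ) 1 := by
  rw [tw_tmul S.hE x (ℛ k h), map_sum, S.hE_smul_LH, Finset.smul_sum]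
  refine Finset.sum_congr rfl fun i _ => ?_
  rw [one_mul]
  refine (hatE_tmul _ _ _).trans ?_
  rw [mul_smul]
  rfl

theorem CrossedProduct.lh_idLE (finv : H →ₗ[k] H →ₗ[k] A) (hfinv : IsConvInverse S.f finv)
    {d : ℕ} (hA : GlDimLE A d) : IdLE E d (LH S.rho N) := by
  let _ : Module A N := Module.compHom N S.jE
  have hsm : ∀ (a : A) (n : N), a • n = S.jE a • n := fun _ _ => rfl
  have hC : IdLE E d (CoInd S.jE N) := CoInd.idLE S.jE S.proj d N (idLE_of_glDimLE hA N)
  let Φ : LH S.rho N →ₗ[E] CoInd S.jE N :=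
    { toFun := fun φ => ⟨{ toFun := fun x => (x • φ) 1
                           map_zero' := by rw [zero_smul]; rfl
                           map_add' := fun x y => by rw [add_smul]; rfl }, by
        intro a x
        change ((S.jE a * x) • φ) 1 = a • (x • φ) 1
        rw [mul_smul, S.jE_smul_LH]; rfl⟩
      map_add' := fun φ ψ => by
        apply Subtype.ext; ext x
        change (x • (φ + ψ)) 1 = (x • φ) 1 + (x • ψ) 1
        rw [smul_add]; rfl
      map_smul' := fun e φ => by
        apply Subtype.ext; ext x
        change (x • (e • φ)) 1 = ((x * e) • φ) 1
        rw [mul_smul] }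
  have hΦ : ∀ φ x, (Φ φ).1 x = (x • φ) 1 := fun _ _ => rfl
  have hbij := S.tw_bijective finv hfinv
  have hinj : Function.Injective Φ := by
    rw [injective_iff_map_eq_zero]
    intro φ h
    have h0 : ∀ x, (x • φ) 1 = 0 := fun x =>
      DFunLike.congr_fun (congrArg Subtype.val h) x
    have h1 : ∀ t, hatE (φ : H →ₗ[k] N) (tw S.hE t) = 0 := by
      intro t
      induction t with
      | zero => simp
      | add x y hx hy => simp only [map_add, hx, hy, add_zero]
      | tmul x h => rw [S.hatE_tw, h0, smul_zero]
    apply LH.ext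
    intro x
    obtain ⟨t, ht⟩ := hbij.2 ((1 : E) ⊗ₜ[k] x)
    have h2 := h1 t
    rw [ht] at h2
    have h3 : (1 : E) • φ x = 0 := (hatE_tmul (φ : H →ₗ[k] N) 1 x).symm.trans h2
    rw [one_smul] at h3
    exact h3
  have hsurj : Function.Surjective Φ := by
    intro ψ
    have hk : ∀ (c : k) (x : E), ψ.1 (c • x) = c • ψ.1 x := by
      intro c x
      have h1 : c • x = S.jE (c • 1) * x := by rw [S.jE_smul, smul_mul_assoc, one_mul]
      rw [h1, ψ.2, hsm, S.jE_smul, smul_assoc, one_smul]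
    let ψk : H →ₗ[k] N :=
      { toFun := fun h => ψ.1 (S.hE h)
        map_add' := fun x y => by rw [map_add, map_add]
        map_smul' := fun c x => by rw [map_smul, hk]; rfl }
    let G := LinearEquiv.ofBijective _ hbij
    have hG : ∀ t, G t = tw S.hE t := fun _ => rfl
    let φh : E ⊗[k] H →ₗ[k] N := (hatE ψk).comp G.symm.toLinearMap
    have hφh : ∀ t, φh (tw S.hE t) = hatE ψk t := by
      intro t
      change hatE ψk (G.symm (G t)) = _
      rw [G.symm_apply_apply]
    have hleft : ∀ b t, φh ((LinearMap.mulLeft k b).rTensor H t) = b • φh t := by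
      intro b t
      obtain ⟨s, rfl⟩ := hbij.2 t
      rw [← tw_left, hφh, hφh, hatE_left]
    let φ : LH S.rho N := LH.mk S.rho (φh.comp (TensorProduct.mk k E H 1))
    have hφ : ∀ t, hatE (φ : H →ₗ[k] N) t = φh t := by
      intro t
      induction t with
      | zero => simp
      | add x y hx hy => simp only [map_add, hx, hy]
      | tmul x h =>
        refine (hatE_tmul (φ : H →ₗ[k] N) x h).trans ?_
        change x • φh (1 ⊗ₜ h) = _
        rw [← hleft, LinearMap.rTensor_tmul, LinearMap.mulLeft_apply, mul_one]
    refine ⟨φ, ?_⟩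
    have key : ∀ h, (Φ φ).1 (S.hE h) = ψ.1 (S.hE h) := by
      intro h
      have h1 := S.hatE_tw φ 1 h
      rw [hφ, hφh, hatE_tmul, one_smul, one_smul] at h1
      exact h1.symm
    apply Subtype.ext; ext x
    induction x using S.ind with
    | h0 => rw [map_zero, map_zero]
    | h2 x y hx hy => rw [map_add, map_add, hx, hy]
    | h1 a h =>
      rw [← S.aE_mul_hE]
      exact ((Φ φ).2 a _).trans ((congrArg (a • ·) (key h)).trans (ψ.2 a _).symm)
  let e := LinearEquiv.ofBijective Φ ⟨hinj, hsurj⟩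
  exact hC.retract e.toLinearMap e.symm.toLinearMap e.symm_apply_apply
end iso
end Fin

/-- **Global dimension of a crossed product.**
Let `k` be a field and `E = A #_f H` a crossed product with convolution invertible
cocycle `f`.  Then `gl.dim(E) ≤ gl.dim(A) + gl.dim(H)`, where `gl.dim` denotes the left
global dimension. -/
theorem glDim_crossedProduct_le
    {k A H E : Type} [Field k] [Ring A] [Algebra k A] [Ring H] [HopfAlgebra k H]
    [Ring E] [Algebra k E] (S : CrossedProduct k A H E)
    (finv : H →ₗ[k] H →ₗ[k] A) (hfinv : IsConvInverse S.f finv) :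
    ∀ (dA dH : ℕ), GlDimLE A dA → GlDimLE H dH → GlDimLE E (dA + dH) := by
  intro dA dH hA hH
  exact glDim_of_coaction S.rho S.rho_counit (fun N _ _ _ _ => S.lh_idLE finv hfinv hA) hH

end HopfCrossed
end
end
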